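/- Let n ≥ 1 and let Ω ⊆ ℝⁿ be a nonempty open connected set. Let u : Ω → ℝ be a C² function satisfying −√2 · Σ_{i=1}^n 1/(1 + λ_i(D²u(x))) = −u(x) + (1/2)⟨x, Du(x)⟩ for all x ∈ Ω, such that either D²u(x) > −I for every x ∈ Ω, or D²u(x) < −I for every x ∈ Ω. Assume that |Du| = ∞ on ∂Ω or |u| = ∞ on ∂Ω. Then Ω = ℝⁿ and u is a quadratic polynomial. -/

import Mathlib

open Real Filter Matrix
open scoped RealInnerProductSpace

noncomputable section

/-- The Hessian matrix of `u` at `x`, with entries the second iterated derivatives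
in the coordinate directions. -/
def Hess (n : ℕ) (u : EuclideanSpace ℝ (Fin n) → ℝ) (x : EuclideanSpace ℝ (Fin n)) :
    Matrix (Fin n) (Fin n) ℝ :=
  Matrix.of fun i j =>
    iteratedFDeriv ℝ 2 u x ![EuclideanSpace.single i 1, EuclideanSpace.single j 1]

open Classical in
/-- The eigenvalues of a real symmetric matrix (junk value `0` if not symmetric). -/
def eigs {n : ℕ} (A : Matrix (Fin n) (Fin n) ℝ) : Fin n → ℝ :=
  if h : A.IsHermitian then h.eigenvalues else 0

/-- `u` is a quadratic polynomial:
`u x = (1/2)⟨x, A x⟩ + ⟨β, x⟩ + c` with `A` symmetric. -/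
def IsQuadPoly (n : ℕ) (u : EuclideanSpace ℝ (Fin n) → ℝ) : Prop :=
  ∃ (A : Matrix (Fin n) (Fin n) ℝ) (β : EuclideanSpace ℝ (Fin n)) (c : ℝ), A.IsSymm ∧
    ∀ x, u x = (1/2) * (∑ i, ∑ j, A i j * x i * x j) + ⟪β, x⟫ + c

/-!
Put `w = u + ½ |x|²`, or `-u - ½ |x|²` in the concave case. The equation says that the Euler defect
`θ = w - ½ ⟨x, Dw⟩` equals `κ tr (D²w)⁻¹` with `κ = √2`, while `-I` bounding `D²u` on one side makes
`w` strictly convex. If `v` is a local Legendre transform of `w`, the nonlinear equation becomes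
the linear drift equation `κ Δv = ½ ⟨y, Dv⟩ - v`, and `θ`, read off in the slope variable
`y = Dw(x)`, satisfies `κ Δθ - ½ ⟨y, Dθ⟩ = 0`. As `θ` is merely `C¹` there, the last equation holds
only in the sense of limits of `C²` functions, which still gives the strong minimum principle.

The blow-up of `u` or `Du` on `∂Ω` makes a penalisation of `θ` proper; an a priori bound on the
penalty at the minimisers lets the penalisation be removed, so that `θ` attains its minimum and is
therefore constant. Constancy of `θ` means that `w` minus a constant is homogeneous of degree two on
rays. Along a ray `w` and `Dw` then stay bounded, so no ray towards the origin leaves `Ω`; hence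
`0 ∈ Ω`, `w` is its second-order Taylor polynomial at `0`, and a boundary point would contradict
the blow-up.
-/

section

open Set Topology Gradient
open scoped InnerProductSpace Laplacian Ring

variable {E : Type*} [NormedAddCommGroup E] [InnerProductSpace ℝ E] [FiniteDimensional ℝ E]

/-! ### The Hessian operator and the Laplacian -/

/-- The Hessian of `f` at `x`, as an operator on an arbitrary Euclidean space: the derivative of the
gradient field. On `ℝⁿ` its matrix is `Hess`. -/
def hess (f : E → ℝ) (x : E) : E →L[ℝ] E := fderiv ℝ (∇ f) x

/-- The trace, as a continuous linear functional on the space of operators; it turns the Hessian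
into the Laplacian. -/
def traceL : (E →L[ℝ] E) →L[ℝ] ℝ :=
  LinearMap.toContinuousLinearMap (LinearMap.trace ℝ E ∘ₗ ContinuousLinearMap.coeLM ℝ)

lemma traceL_apply (H : E →L[ℝ] E) : traceL H = LinearMap.trace ℝ E H := rfl

lemma traceL_eq_sum_inner {ι : Type*} [Fintype ι] (H : E →L[ℝ] E) (b : OrthonormalBasis ι ℝ E) :
    traceL H = ∑ i, ⟪H (b i), b i⟫ := by
  simp only [traceL_apply, LinearMap.trace_eq_sum_inner _ b, real_inner_comm (b _),
    ContinuousLinearMap.coe_coe]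

lemma traceL_one : traceL (1 : E →L[ℝ] E) = Module.finrank ℝ E := LinearMap.trace_one ℝ E

lemma traceL_smulRight (l : E →L[ℝ] ℝ) (x : E) : traceL (l.smulRight x) = l x :=
  LinearMap.trace_smulRight (l : E →ₗ[ℝ] ℝ) x

lemma inner_hess (f : E → ℝ) (x p q : E) :
    ⟪hess f x p, q⟫ = fderiv ℝ (fderiv ℝ f) x p q := by
  have : hess f x = _ :=
    (InnerProductSpace.toDual ℝ E).symm.comp_fderiv (f := fderiv ℝ f) (x := x)
  rw [this]
  exact InnerProductSpace.toDual_symm_apply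

lemma laplacian_eq_traceL_hess (f : E → ℝ) (x : E) : Δ f x = traceL (hess f x) := by
  simp [InnerProductSpace.laplacian_eq_iteratedFDeriv_stdOrthonormalBasis,
    traceL_eq_sum_inner _ (stdOrthonormalBasis ℝ E), inner_hess, iteratedFDeriv_two_apply]

lemma isSymmetric_hess {f : E → ℝ} {x : E} (hf : ContDiffAt ℝ 2 f x) :
    (hess f x : E →ₗ[ℝ] E).IsSymmetric := fun p q => by
  rw [real_inner_comm _ p]
  simpa [inner_hess] using (hf.isSymmSndFDerivAt (by simp)).eq p q

lemma contDiffAt_gradient {f : E → ℝ} {x : E} {m n : WithTop ℕ∞} (hf : ContDiffAt ℝ n f x)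
    (hmn : m + 1 ≤ n) : ContDiffAt ℝ m (∇ f) x :=
  (InnerProductSpace.toDual ℝ E).symm.contDiff.contDiffAt.comp x (hf.fderiv_right hmn)

lemma hasFDerivAt_gradient {f : E → ℝ} {x : E} (hf : ContDiffAt ℝ 2 f x) :
    HasFDerivAt (∇ f) (hess f x) x :=
  ((contDiffAt_gradient (m := 1) hf (by norm_num)).differentiableAt one_ne_zero).hasFDerivAt

lemma contDiffAt_hess {f : E → ℝ} {x : E} {m n : WithTop ℕ∞} (hf : ContDiffAt ℝ n f x)
    (hmn : m + 1 + 1 ≤ n) : ContDiffAt ℝ m (hess f) x :=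
  (contDiffAt_gradient hf hmn).fderiv_right le_rfl

lemma continuousAt_laplacian {f : E → ℝ} {x : E} (hf : ContDiffAt ℝ 2 f x) :
    ContinuousAt (Δ f) x := by
  simp only [funext (laplacian_eq_traceL_hess f)]
  exact traceL.continuous.continuousAt.comp
    (contDiffAt_hess (m := 0) hf (by norm_num)).continuousAt

lemma hess_eq_of_hasFDerivAt {f : E → ℝ} {G : E → E} {H : E →L[ℝ] E} {x : E}
    (hG : ∀ᶠ z in 𝓝 x, HasGradientAt f (G z) z) (hH : HasFDerivAt G H x) : hess f x = H := by
  have : ∇ f =ᶠ[𝓝 x] G := hG.mono fun z hz => hz.gradient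
  exact this.fderiv_eq.trans hH.fderiv

lemma hasGradientAt_gradient {f : E → ℝ} {x : E} (hf : ContDiffAt ℝ 2 f x) :
    HasGradientAt f (∇ f x) x :=
  (hf.differentiableAt two_ne_zero).hasGradientAt

lemma eventually_hasGradientAt {f : E → ℝ} {x : E} (hf : ContDiffAt ℝ 2 f x) :
    ∀ᶠ z in 𝓝 x, HasGradientAt f (∇ f z) z :=
  (hf.eventually (by simp)).mono fun _ => hasGradientAt_gradient

lemma hasGradientAt_add {f g : E → ℝ} {f' g' x : E} (hf : HasGradientAt f f' x)
    (hg : HasGradientAt g g' x) : HasGradientAt (f + g) (f' + g') x := by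
  rw [hasGradientAt_iff_hasFDerivAt, map_add]
  exact hf.hasFDerivAt.add hg.hasFDerivAt

lemma hasGradientAt_sub {f g : E → ℝ} {f' g' x : E} (hf : HasGradientAt f f' x)
    (hg : HasGradientAt g g' x) : HasGradientAt (f - g) (f' - g') x := by
  rw [hasGradientAt_iff_hasFDerivAt, map_sub]
  exact hf.hasFDerivAt.sub hg.hasFDerivAt

lemma hasGradientAt_const_smul {f : E → ℝ} {f' x : E} (hf : HasGradientAt f f' x) (r : ℝ) :
    HasGradientAt (r • f) (r • f') x := by
  rw [hasGradientAt_iff_hasFDerivAt, map_smul]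
  exact hf.hasFDerivAt.const_smul r

lemma hasGradientAt_comp {φ : ℝ → ℝ} {φ' : ℝ} {f : E → ℝ} {f' x : E} (hφ : HasDerivAt φ φ' (f x))
    (hf : HasGradientAt f f' x) : HasGradientAt (φ ∘ f) (φ' • f') x := by
  rw [hasGradientAt_iff_hasFDerivAt, map_smul]
  exact hφ.comp_hasFDerivAt x hf.hasFDerivAt

lemma hasGradientAt_comp_smul_add (f : E → ℝ) (r : ℝ) (e x : E)
    (hf : DifferentiableAt ℝ f (r • x + e)) :
    HasGradientAt (fun z => f (r • z + e)) (r • ∇ f (r • x + e)) x := by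
  have hL : HasFDerivAt (fun z : E => r • z + e) (r • ContinuousLinearMap.id ℝ E) x :=
    ((hasFDerivAt_id x).const_smul r).add_const e
  rw [hasGradientAt_iff_hasFDerivAt, map_smul]
  exact (hf.hasGradientAt.hasFDerivAt.comp x hL).congr_fderiv (by ext; simp)

lemma hess_comp {φ : ℝ → ℝ} {f : E → ℝ} {x : E} (hφ : ContDiffAt ℝ 2 φ (f x))
    (hf : ContDiffAt ℝ 2 f x) :
    hess (φ ∘ f) x = deriv φ (f x) • hess f x +
      (deriv (deriv φ) (f x) • fderiv ℝ f x).smulRight (∇ f x) := by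
  have hφf : ∀ᶠ z in 𝓝 x, ContDiffAt ℝ 2 φ (f z) :=
    hf.continuousAt.eventually (hφ.eventually (by simp))
  have hφ' : HasDerivAt (deriv φ) (deriv (deriv φ) (f x)) (f x) :=
    ((hφ.derivWithin (m := 1) (by norm_num)).differentiableAt one_ne_zero).hasDerivAt
  refine hess_eq_of_hasFDerivAt (G := fun z => deriv φ (f z) • ∇ f z) ?_ ?_
  · filter_upwards [hφf, eventually_hasGradientAt hf] with z hφz hfz
    exact hasGradientAt_comp (hφz.differentiableAt two_ne_zero).hasDerivAt hfz
  · exact (hφ'.comp_hasFDerivAt x (hf.differentiableAt two_ne_zero).hasFDerivAt).smul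
      (hasFDerivAt_gradient hf)

lemma laplacian_comp {φ : ℝ → ℝ} {f : E → ℝ} {x : E} (hφ : ContDiffAt ℝ 2 φ (f x))
    (hf : ContDiffAt ℝ 2 f x) :
    Δ (φ ∘ f) x = deriv φ (f x) * Δ f x + deriv (deriv φ) (f x) * ‖∇ f x‖ ^ 2 := by
  rw [laplacian_eq_traceL_hess, hess_comp hφ hf, map_add, map_smul, traceL_smulRight,
    laplacian_eq_traceL_hess, _root_.smul_apply,
    ← inner_gradient_left, real_inner_self_eq_norm_sq, smul_eq_mul, smul_eq_mul]

lemma laplacian_comp_smul_add (f : E → ℝ) (r : ℝ) (e x : E) (hf : ContDiffAt ℝ 2 f (r • x + e)) :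
    Δ (fun z => f (r • z + e)) x = r ^ 2 * Δ f (r • x + e) := by
  have hL : HasFDerivAt (fun z : E => r • z + e) (r • ContinuousLinearMap.id ℝ E) x :=
    ((hasFDerivAt_id x).const_smul r).add_const e
  have hgrad : ∀ᶠ z in 𝓝 x, HasGradientAt (fun z => f (r • z + e)) (r • ∇ f (r • z + e)) z :=
    (hL.continuousAt.eventually (hf.eventually (by simp))).mono fun z hz =>
      hasGradientAt_comp_smul_add f r e z (hz.differentiableAt two_ne_zero)
  have hhess := hess_eq_of_hasFDerivAt hgrad
    (((hasFDerivAt_gradient hf).comp x hL).const_smul r)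
  rw [laplacian_eq_traceL_hess, hhess, laplacian_eq_traceL_hess, ContinuousLinearMap.comp_smul,
    ContinuousLinearMap.comp_id, map_smul, map_smul, smul_eq_mul, smul_eq_mul]
  ring

lemma hasGradientAt_norm_sub_sq (y x : E) :
    HasGradientAt (fun z => ‖z - y‖ ^ 2) ((2 : ℝ) • (x - y)) x := by
  rw [hasGradientAt_iff_hasFDerivAt]
  refine ((hasFDerivAt_id x).sub_const y).norm_sq.congr_fderiv ?_
  ext p
  simp [two_mul]

lemma hess_norm_sub_sq (y x : E) : hess (fun z => ‖z - y‖ ^ 2) x = (2 : ℝ) • 1 :=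
  hess_eq_of_hasFDerivAt (Eventually.of_forall (hasGradientAt_norm_sub_sq y))
    (((hasFDerivAt_id x).sub_const y).const_smul (2 : ℝ))

lemma laplacian_norm_sub_sq (y x : E) :
    Δ (fun z => ‖z - y‖ ^ 2) x = 2 * Module.finrank ℝ E := by
  rw [laplacian_eq_traceL_hess, hess_norm_sub_sq, map_smul, traceL_one, smul_eq_mul]

/-! ### The second derivative test, also for limits of twice differentiable functions -/

lemma deriv_deriv_nonneg_of_isLocalMin {g : ℝ → ℝ} {x : ℝ} (hg : ContinuousAt g x)
    (hmin : IsLocalMin g x) : 0 ≤ deriv (deriv g) x := by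
  by_contra! hneg
  have hmax : IsLocalMax g x := isLocalMax_of_deriv_deriv_neg hneg hmin.deriv_eq_zero hg
  have hconst : g =ᶠ[𝓝 x] fun _ => g x := by
    filter_upwards [hmin, hmax] with t h₁ h₂ using le_antisymm h₂ h₁
  have hzero : deriv g =ᶠ[𝓝 x] fun _ => 0 := by simpa using hconst.deriv
  simp [hzero.deriv_eq] at hneg

lemma gradient_eq_zero_of_isLocalMin {f : E → ℝ} {x : E} (hmin : IsLocalMin f x) : ∇ f x = 0 := by
  simp [gradient, hmin.fderiv_eq_zero]

lemma inner_hess_self_nonneg_of_isLocalMin {f : E → ℝ} {x : E} (hf : ContDiffAt ℝ 2 f x)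
    (hmin : IsLocalMin f x) (p : E) : 0 ≤ ⟪hess f x p, p⟫ := by
  have hline (t : ℝ) : HasDerivAt (fun t : ℝ => x + t • p) p t := by
    simpa using ((hasDerivAt_id t).smul_const p).const_add x
  have hline₀ : Tendsto (fun t : ℝ => x + t • p) (𝓝 0) (𝓝 x) := by
    simpa using (hline 0).continuousAt.tendsto
  have hderiv : deriv (fun t : ℝ => f (x + t • p)) =ᶠ[𝓝 0] fun t => ⟪∇ f (x + t • p), p⟫ := by
    filter_upwards [hline₀.eventually (eventually_hasGradientAt hf)] with t ht
    exact (ht.hasFDerivAt.comp_hasDerivAt t (hline t)).deriv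
  have hderiv₂ : HasDerivAt (fun t : ℝ => ⟪∇ f (x + t • p), p⟫) ⟪hess f x p, p⟫ 0 := by
    have hgrad : HasFDerivAt (∇ f) (hess f x) (x + (0 : ℝ) • p) := by
      simpa using hasFDerivAt_gradient hf
    simpa using (hgrad.comp_hasDerivAt (0 : ℝ) (hline 0)).inner ℝ (hasDerivAt_const (0 : ℝ) p)
  rw [← hderiv₂.deriv, ← hderiv.deriv_eq]
  refine deriv_deriv_nonneg_of_isLocalMin (ContinuousAt.comp ?_ (hline 0).continuousAt) ?_
  · simpa using hf.continuousAt
  · simpa [IsLocalMin, IsMinFilter] using hline₀.eventually hmin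

lemma laplacian_nonneg_of_isLocalMin {f : E → ℝ} {x : E} (hf : ContDiffAt ℝ 2 f x)
    (hmin : IsLocalMin f x) : 0 ≤ Δ f x := by
  rw [laplacian_eq_traceL_hess, traceL_eq_sum_inner _ (stdOrthonormalBasis ℝ E)]
  exact Finset.sum_nonneg fun i _ => inner_hess_self_nonneg_of_isLocalMin hf hmin _

lemma frequently_isLocalMin_of_tendsto {ι X : Type*} [PseudoMetricSpace X] [ProperSpace X]
    {l : Filter ι} [l.NeBot] {F : ι → X → ℝ} {a : X → ℝ} {y : X}
    (hF : ∀ᶠ p in l ×ˢ 𝓝 y, ContinuousAt (F p.1) p.2)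
    (hlim : ∀ᶠ z in 𝓝 y, Tendsto (fun p : ι × X => F p.1 p.2) (l ×ˢ 𝓝 z) (𝓝 (a z)))
    (hmin : ∀ᶠ z in 𝓝 y, z ≠ y → a y < a z) :
    ∃ᶠ p in l ×ˢ 𝓝 y, IsLocalMin (F p.1) p.2 := by
  intro hnot
  obtain ⟨P, hP, Q, hQ, hPQ⟩ := eventually_prod_iff.1 (hF.and hnot)
  obtain ⟨r, hr, hball⟩ := Metric.nhds_basis_closedBall.eventually_iff.1
    (hQ.and (hlim.and hmin))
  have hcenter : Tendsto (fun j => F j y) l (𝓝 (a y)) :=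
    hlim.self_of_nhds.comp (tendsto_id.prodMk (tendsto_const_pure.mono_right (pure_le_nhds y)))
  have hsphere : ∀ᶠ p in l ×ˢ 𝓝ˢ (Metric.sphere y r), F p.1 y < F p.1 p.2 := by
    refine (isCompact_sphere y r).mem_prod_nhdsSet_of_forall fun z hz => ?_
    obtain ⟨-, hlimz, hminz⟩ := hball (Metric.sphere_subset_closedBall hz)
    exact (hcenter.comp tendsto_fst).eventually_lt hlimz
      (hminz (by rintro rfl; simp [hr.ne] at hz))
  obtain ⟨j, hjP, hj⟩ := (hP.and hsphere.curry).exists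
  have hjcont : ContinuousOn (F j) (Metric.closedBall y r) := fun z hz =>
    (hPQ hjP (hball hz).1).1.continuousWithinAt
  obtain ⟨z, hz, hzmin⟩ := Metric.exists_isLocalMin_mem_ball hjcont
    (Metric.mem_closedBall_self hr.le) fun z hz => hj.self_of_nhdsSet z hz
  exact (hPQ hjP (hball (Metric.ball_subset_closedBall hz)).1).2 hzmin

/-- `a` is, near every point of `U`, the limit of a sequence of functions of class `C²` whose
gradients and Laplacians converge to `g` and `c`. Convergence is along `atTop ×ˢ 𝓝 y`, that is,
uniform near `y` up to the modulus of continuity of the limit; so `a` need not be twice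
differentiable, but `c` is still its Laplacian for the purposes of the maximum principle. -/
def HasApproxLaplacianOn (U : Set E) (a : E → ℝ) (g : E → E) (c : E → ℝ) : Prop :=
  ∃ F : ℕ → E → ℝ, ∀ y ∈ U, (∀ᶠ p in atTop ×ˢ 𝓝 y, ContDiffAt ℝ 2 (F p.1) p.2) ∧
    Tendsto (fun p : ℕ × E => F p.1 p.2) (atTop ×ˢ 𝓝 y) (𝓝 (a y)) ∧
    Tendsto (fun p : ℕ × E => ∇ (F p.1) p.2) (atTop ×ˢ 𝓝 y) (𝓝 (g y)) ∧
    Tendsto (fun p : ℕ × E => Δ (F p.1) p.2) (atTop ×ˢ 𝓝 y) (𝓝 (c y))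

namespace HasApproxLaplacianOn

variable {U : Set E} {a a' c c' : E → ℝ} {g g' : E → E}

lemma congr (h : HasApproxLaplacianOn U a g c) (ha : EqOn a a' U) (hg : EqOn g g' U)
    (hc : EqOn c c' U) : HasApproxLaplacianOn U a' g' c' := by
  obtain ⟨F, hF⟩ := h
  exact ⟨F, fun y hy => by simpa only [← ha hy, ← hg hy, ← hc hy] using hF y hy⟩

lemma add (h : HasApproxLaplacianOn U a g c) (h' : HasApproxLaplacianOn U a' g' c') :
    HasApproxLaplacianOn U (a + a') (g + g') (c + c') := by
  obtain ⟨F, hF⟩ := h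
  obtain ⟨F', hF'⟩ := h'
  refine ⟨fun j => F j + F' j, fun y hy => ?_⟩
  obtain ⟨hd, hv, hgr, hl⟩ := hF y hy
  obtain ⟨hd', hv', hgr', hl'⟩ := hF' y hy
  refine ⟨?_, hv.add hv', (hgr.add hgr').congr' ?_, (hl.add hl').congr' ?_⟩
  · filter_upwards [hd, hd'] with p hp hp' using hp.add hp'
  · filter_upwards [hd, hd'] with p hp hp'
    exact (hasGradientAt_add (hasGradientAt_gradient hp) (hasGradientAt_gradient hp')).gradient.symm
  · filter_upwards [hd, hd'] with p hp hp' using (hp.laplacian_add hp').symm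

lemma comp (h : HasApproxLaplacianOn U a g c) {φ : ℝ → ℝ} (hφ : ContDiff ℝ 2 φ) :
    HasApproxLaplacianOn U (φ ∘ a) (fun y => deriv φ (a y) • g y)
      (fun y => deriv φ (a y) * c y + deriv (deriv φ) (a y) * ‖g y‖ ^ 2) := by
  have hφ' : ContDiff ℝ 1 (deriv φ) := ContDiff.deriv' (by simpa [one_add_one_eq_two] using hφ)
  have hφ'' : Continuous (deriv (deriv φ)) := hφ'.continuous_deriv le_rfl
  obtain ⟨F, hF⟩ := h
  refine ⟨fun j => φ ∘ F j, fun y hy => ?_⟩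
  obtain ⟨hd, hv, hgr, hl⟩ := hF y hy
  have hvφ' := (hφ'.continuous.tendsto (a y)).comp hv
  refine ⟨?_, (hφ.continuous.tendsto (a y)).comp hv, (hvφ'.smul hgr).congr' ?_,
    ((hvφ'.mul hl).add (((hφ''.tendsto (a y)).comp hv).mul (hgr.norm.pow 2))).congr' ?_⟩
  · filter_upwards [hd] with p hp using hφ.contDiffAt.comp _ hp
  · filter_upwards [hd] with p hp
    exact (hasGradientAt_comp (hφ.differentiable two_ne_zero _).hasDerivAt
      (hasGradientAt_gradient hp)).gradient.symm
  · filter_upwards [hd] with p hp using (laplacian_comp hφ.contDiffAt hp).symm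

lemma const_mul (h : HasApproxLaplacianOn U a g c) (r : ℝ) :
    HasApproxLaplacianOn U (fun y => r * a y) (fun y => r • g y) (fun y => r * c y) := by
  have hderiv : deriv (fun t : ℝ => r * t) = fun _ => r := by ext t; simp
  refine (h.comp (φ := fun t => r * t) (contDiff_const.mul contDiff_id)).congr
    (fun _ _ => rfl) (fun y _ => ?_) (fun y _ => ?_) <;> simp [hderiv]

lemma sq (h : HasApproxLaplacianOn U a g c) :
    HasApproxLaplacianOn U (fun y => a y ^ 2) (fun y => (2 * a y) • g y)
      (fun y => 2 * a y * c y + 2 * ‖g y‖ ^ 2) := by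
  have hderiv : deriv (fun t : ℝ => t ^ 2) = fun t => 2 * t := by ext t; simp
  have hderiv₂ : deriv (fun t : ℝ => 2 * t) = fun _ => 2 := by ext t; simp
  refine (h.comp (φ := fun t => t ^ 2) (contDiff_id.pow 2)).congr
    (fun _ _ => rfl) (fun y _ => ?_) (fun y _ => ?_) <;> simp [hderiv, hderiv₂]

lemma of_contDiffOn (hU : IsOpen U) (ha : ContDiffOn ℝ 2 a U) :
    HasApproxLaplacianOn U a (∇ a) (Δ a) := by
  refine ⟨fun _ => a, fun y hy => ?_⟩
  have hay : ContDiffAt ℝ 2 a y := ha.contDiffAt (hU.mem_nhds hy)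
  exact ⟨tendsto_snd.eventually (hay.eventually (by simp)),
    hay.continuousAt.tendsto.comp tendsto_snd,
    (hasFDerivAt_gradient hay).continuousAt.tendsto.comp tendsto_snd,
    (continuousAt_laplacian hay).tendsto.comp tendsto_snd⟩

lemma sum {ι : Type*} (s : Finset ι) {a c : ι → E → ℝ} {g : ι → E → E}
    (h : ∀ i ∈ s, HasApproxLaplacianOn U (a i) (g i) (c i)) :
    HasApproxLaplacianOn U (∑ i ∈ s, a i) (∑ i ∈ s, g i) (∑ i ∈ s, c i) := by
  induction s using Finset.cons_induction with
  | empty =>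
    refine ⟨fun _ => 0, fun y _ => ?_⟩
    have hzero : Δ (0 : E → ℝ) = 0 := InnerProductSpace.laplacian_const
    have hgrad : ∇ (0 : E → ℝ) = 0 := gradient_const' 0
    exact ⟨Eventually.of_forall fun _ => contDiffAt_const, by simp, by simp [hgrad],
      by simp [hzero]⟩
  | cons i s hi ih =>
    simp only [Finset.sum_cons]
    exact (h i (by simp)).add (ih fun k hk => h k (by simp [hk]))

lemma isLocalMin_of_strict (hU : IsOpen U) (h : HasApproxLaplacianOn U a g c) {y : E} (hy : y ∈ U)
    (hmin : ∀ᶠ z in 𝓝 y, z ≠ y → a y < a z) : g y = 0 ∧ 0 ≤ c y := by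
  obtain ⟨F, hF⟩ := h
  obtain ⟨hd, -, hgr, hl⟩ := hF y hy
  have hfreq := (frequently_isLocalMin_of_tendsto (hd.mono fun _ hp => hp.continuousAt)
    (eventually_of_mem (hU.mem_nhds hy) fun z hz => (hF z hz).2.1) hmin).and_eventually hd
  exact ⟨isClosed_singleton.mem_of_frequently_of_tendsto
      (hfreq.mono fun _ hp => gradient_eq_zero_of_isLocalMin hp.1) hgr,
    isClosed_Ici.mem_of_frequently_of_tendsto
      (hfreq.mono fun _ hp => laplacian_nonneg_of_isLocalMin hp.2 hp.1) hl⟩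

/-- Adding `‖z - y‖ ^ 4`, which is flat to third order at `y`, makes the minimum strict. -/
lemma of_isLocalMin (hU : IsOpen U) (h : HasApproxLaplacianOn U a g c) {y : E} (hy : y ∈ U)
    (hmin : IsLocalMin a y) : g y = 0 ∧ 0 ≤ c y := by
  have hquad : HasApproxLaplacianOn U (fun z => ‖z - y‖ ^ 2) _ _ :=
    of_contDiffOn hU ((contDiff_id.sub contDiff_const).norm_sq ℝ).contDiffOn
  have hstrict : ∀ᶠ z in 𝓝 y, z ≠ y → a y + (‖y - y‖ ^ 2) ^ 2 < a z + (‖z - y‖ ^ 2) ^ 2 := by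
    filter_upwards [hmin] with z hz hne
    have : 0 < (‖z - y‖ ^ 2) ^ 2 := by have := norm_pos_iff.2 (sub_ne_zero.2 hne); positivity
    simpa using add_lt_add_of_le_of_lt hz this
  simpa [(hasGradientAt_norm_sub_sq y y).gradient] using
    (h.add hquad.sq).isLocalMin_of_strict hU hy hstrict

end HasApproxLaplacianOn

/-! ### Directional derivatives of a function with differentiable Laplacian -/

lemma tendsto_inv_smul_sub_of_hasStrictFDerivAt {X F : Type*} [NormedAddCommGroup X]
    [NormedSpace ℝ X] [NormedAddCommGroup F] [NormedSpace ℝ F] {Ψ : ℝ × X → F}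
    {L : ℝ × X →L[ℝ] F} {y : X} (hΨ : HasStrictFDerivAt Ψ L (0, y)) :
    Tendsto (fun p : ℝ × X => p.1⁻¹ • (Ψ p - Ψ (0, p.2))) (𝓝[≠] 0 ×ˢ 𝓝 y) (𝓝 (L (1, 0))) := by
  have hle : 𝓝[≠] (0 : ℝ) ×ˢ 𝓝 y ≤ 𝓝 (0, y) := by
    rw [nhds_prod_eq]; exact prod_mono_left _ nhdsWithin_le_nhds
  have hpair : Tendsto (fun p : ℝ × X => (p, ((0 : ℝ), p.2))) (𝓝[≠] 0 ×ˢ 𝓝 y)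
      (𝓝 ((0, y), (0, y))) := by
    rw [nhds_prod_eq]
    refine Tendsto.prodMk hle (Tendsto.mono_right ?_ nhds_prod_eq.ge)
    exact tendsto_const_nhds.prodMk tendsto_snd
  have hdiff (p : ℝ × X) : p - (0, p.2) = p.1 • ((1 : ℝ), (0 : X)) := by ext <;> simp
  have ho : (fun p : ℝ × X => Ψ p - Ψ (0, p.2) - p.1 • L (1, 0)) =o[𝓝[≠] 0 ×ˢ 𝓝 y]
      fun p => p.1 := by
    have := (hΨ.isLittleO.comp_tendsto hpair).norm_right
    refine (this.congr (fun p => ?_) fun p => ?_).of_norm_right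
    · simp only [Function.comp_apply, hdiff, map_smul]
    · simp only [Function.comp_apply, hdiff, norm_smul]
      simp [Prod.norm_def]
  rw [← tendsto_sub_nhds_zero_iff]
  refine (ho.tendsto_inv_smul_nhds_zero).congr' ?_
  filter_upwards [tendsto_fst.eventually self_mem_nhdsWithin] with p hp
  rw [smul_sub, smul_smul, inv_mul_cancel₀ hp, one_smul]

lemma tendsto_dilation_quotient {X F : Type*} [NormedAddCommGroup X] [NormedSpace ℝ X]
    [NormedAddCommGroup F] [NormedSpace ℝ F] {φ : X → F} {φ' : X →L[ℝ] F} {y : X}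
    (hφ : HasStrictFDerivAt φ φ' y) (k : ℕ) (σ : ℝ) (e : X) :
    Tendsto (fun p : ℝ × X => p.1⁻¹ • ((1 + p.1 * σ) ^ k • φ ((1 + p.1 * σ) • p.2 + p.1 • e) -
      φ p.2)) (𝓝[≠] 0 ×ˢ 𝓝 y) (𝓝 (φ' (σ • y + e) + (k * σ) • φ y)) := by
  have hfst : HasStrictFDerivAt (fun p : ℝ × X => p.1) (ContinuousLinearMap.fst ℝ ℝ X) (0, y) :=
    hasStrictFDerivAt_fst
  have hfactor := (hfst.mul_const σ).const_add 1
  have hpoint := (hfactor.smul hasStrictFDerivAt_snd).add (hfst.smul_const e)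
  have hφ₀ : HasStrictFDerivAt φ φ' ((1 + ((0 : ℝ), y).1 * σ) • ((0 : ℝ), y).2 +
      ((0 : ℝ), y).1 • e) := by simpa using hφ
  have := tendsto_inv_smul_sub_of_hasStrictFDerivAt
    ((hfactor.pow k).smul (hφ₀.comp ((0 : ℝ), y) hpoint))
  simpa using this

/-- The difference quotient of `v` along the flow `z ↦ z + s • (σ • z + e)` of dilations. Its
gradient and Laplacian are difference quotients of `∇ v` and `Δ v`, so in the limit `s → 0` no
third derivative of `v` is needed. -/
def dilationQuotient {X : Type*} [NormedAddCommGroup X] [NormedSpace ℝ X] (v : X → ℝ) (σ : ℝ)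
    (e : X) (s : ℝ) : X → ℝ :=
  s⁻¹ • ((fun z => v ((1 + s * σ) • z + s • e)) - v)

lemma contDiffAt_dilationQuotient {X : Type*} [NormedAddCommGroup X] [NormedSpace ℝ X]
    {v : X → ℝ} {σ s : ℝ} {e z : X} (hdil : ContDiffAt ℝ 2 v ((1 + s * σ) • z + s • e))
    (hv : ContDiffAt ℝ 2 v z) : ContDiffAt ℝ 2 (dilationQuotient v σ e s) z :=
  ((hdil.comp z (by fun_prop)).sub hv).const_smul s⁻¹

section DilationQuotient

variable {v : E → ℝ} {σ s : ℝ} {e z : E}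

lemma gradient_dilationQuotient (hdil : ContDiffAt ℝ 2 v ((1 + s * σ) • z + s • e))
    (hv : ContDiffAt ℝ 2 v z) : ∇ (dilationQuotient v σ e s) z =
      s⁻¹ • ((1 + s * σ) • ∇ v ((1 + s * σ) • z + s • e) - ∇ v z) :=
  (hasGradientAt_const_smul (hasGradientAt_sub (hasGradientAt_comp_smul_add v _ _ _
    (hdil.differentiableAt two_ne_zero)) (hasGradientAt_gradient hv)) _).gradient

lemma laplacian_dilationQuotient (hdil : ContDiffAt ℝ 2 v ((1 + s * σ) • z + s • e))
    (hv : ContDiffAt ℝ 2 v z) : Δ (dilationQuotient v σ e s) z =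
      s⁻¹ • ((1 + s * σ) ^ 2 • Δ v ((1 + s * σ) • z + s • e) - Δ v z) := by
  have hcomp : ContDiffAt ℝ 2 (fun z => v ((1 + s * σ) • z + s • e)) z :=
    hdil.comp z (by fun_prop)
  have hsub : ContDiffAt ℝ 2 ((fun z => v ((1 + s * σ) • z + s • e)) - v) z := hcomp.sub hv
  rw [dilationQuotient, InnerProductSpace.laplacian_smul _ hsub, hcomp.laplacian_sub hv,
    laplacian_comp_smul_add _ _ _ _ hdil, smul_eq_mul, smul_eq_mul, smul_eq_mul]

end DilationQuotient

lemma HasApproxLaplacianOn.inner_gradient_smul_add {U : Set E} {v : E → ℝ} (hU : IsOpen U)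
    (hv : ContDiffOn ℝ 2 v U) (hΔv : ContDiffOn ℝ 1 (Δ v) U) (σ : ℝ) (e : E) :
    HasApproxLaplacianOn U (fun y => ⟪∇ v y, σ • y + e⟫)
      (fun y => hess v y (σ • y + e) + σ • ∇ v y)
      (fun y => ⟪∇ (Δ v) y, σ • y + e⟫ + 2 * σ * Δ v y) := by
  refine ⟨fun j => dilationQuotient v σ e (1 / (j + 1)), fun y hy => ?_⟩
  have hvy : ContDiffAt ℝ 2 v y := hv.contDiffAt (hU.mem_nhds hy)
  have hΔvy := (hΔv.contDiffAt (hU.mem_nhds hy)).hasStrictFDerivAt one_ne_zero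
  have hgrad : HasStrictFDerivAt (∇ v) (hess v y) y :=
    (contDiffAt_gradient (m := 1) hvy (by norm_num)).hasStrictFDerivAt one_ne_zero
  have hs : Tendsto (Prod.map (fun j : ℕ => 1 / ((j : ℝ) + 1)) id) (atTop ×ˢ 𝓝 y)
      (𝓝[≠] 0 ×ˢ 𝓝 y) :=
    Tendsto.prodMap (tendsto_nhdsWithin_iff.2 ⟨tendsto_one_div_add_atTop_nhds_zero_nat,
      Eventually.of_forall fun j => (Nat.one_div_pos_of_nat (α := ℝ)).ne'⟩) tendsto_id
  have hdil : Tendsto (fun p : ℝ × E => (1 + p.1 * σ) • p.2 + p.1 • e)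
      (𝓝[≠] 0 ×ˢ 𝓝 y) (𝓝 y) := by
    have hcont : ContinuousAt (fun p : ℝ × E => (1 + p.1 * σ) • p.2 + p.1 • e) (0, y) := by
      fun_prop
    simpa using hcont.tendsto.mono_left
      (nhds_prod_eq.ge.trans' (prod_mono_left _ nhdsWithin_le_nhds))
  have hsmooth := ((hdil.comp hs).eventually (hvy.eventually (by simp))).and
    (tendsto_snd.eventually (hvy.eventually (by simp)))
  refine ⟨hsmooth.mono fun p hp => contDiffAt_dilationQuotient hp.1 hp.2, ?_, ?_, ?_⟩
  · have := (tendsto_dilation_quotient (hvy.hasStrictFDerivAt two_ne_zero) 0 σ e).comp hs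
    rw [← inner_gradient_left] at this
    simpa [Function.comp_def, dilationQuotient] using this
  · have := (tendsto_dilation_quotient hgrad 1 σ e).comp hs
    simp only [pow_one, Nat.cast_one, one_mul] at this
    exact this.congr' (hsmooth.mono fun p hp => (gradient_dilationQuotient hp.1 hp.2).symm)
  · have := (tendsto_dilation_quotient hΔvy 2 σ e).comp hs
    rw [← inner_gradient_left] at this
    exact this.congr' (hsmooth.mono fun p hp => (laplacian_dilationQuotient hp.1 hp.2).symm)

lemma HasApproxLaplacianOn.norm_gradient_sq {U : Set E} {v : E → ℝ} (hU : IsOpen U)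
    (hv : ContDiffOn ℝ 2 v U) (hΔv : ContDiffOn ℝ 1 (Δ v) U) :
    HasApproxLaplacianOn U (fun y => ‖∇ v y‖ ^ 2) (fun y => (2 : ℝ) • hess v y (∇ v y))
      (fun y => 2 * ⟪∇ (Δ v) y, ∇ v y⟫ + 2 * traceL (hess v y * hess v y)) := by
  let b := stdOrthonormalBasis ℝ E
  have hsum := HasApproxLaplacianOn.sum Finset.univ fun k _ =>
    (inner_gradient_smul_add hU hv hΔv 0 (b k)).sq
  refine hsum.congr (fun y _ => ?_) (fun y _ => ?_) (fun y hy => ?_)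
  · simpa using b.sum_sq_inner_right (∇ v y)
  · simp only [zero_smul, zero_add, add_zero, Finset.sum_apply, mul_smul, ← Finset.smul_sum]
    nth_rw 2 [← b.sum_repr' (∇ v y)]
    simp only [map_sum, map_smul, real_inner_comm]
  · have hsymm := isSymmetric_hess (hv.contDiffAt (hU.mem_nhds hy))
    have hnorm (k) : ‖hess v y (b k)‖ ^ 2 = ⟪(hess v y * hess v y) (b k), b k⟫ := by
      rw [← real_inner_self_eq_norm_sq]
      exact (hsymm _ _).symm
    simp only [zero_smul, zero_add, add_zero, mul_zero, zero_mul, Finset.sum_apply,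
      Finset.sum_add_distrib, hnorm, ← Finset.mul_sum, ← traceL_eq_sum_inner, mul_assoc]
    rw [← b.sum_inner_mul_inner]
    simp only [real_inner_comm, mul_comm]

/-! ### The drift Laplacian `κ Δ - ½ ⟨y, ∇⟩` and its eigenfunctions -/

/-- The Euler defect `w - ½ ⟨x, ∇ w⟩`, the side of the equation which vanishes when `w` is
homogeneous of degree two. -/
def eulerDefect (w : E → ℝ) (x : E) : ℝ := w x - (1 / 2) * ⟪x, ∇ w x⟫

lemma hasGradientAt_eulerDefect {w : E → ℝ} {x : E} (hw : ContDiffAt ℝ 2 w x) :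
    HasGradientAt (eulerDefect w) ((1 / 2 : ℝ) • (∇ w x - hess w x x)) x := by
  have hgrad := hasGradientAt_gradient hw
  rw [hasGradientAt_iff_hasFDerivAt] at hgrad ⊢
  refine (hgrad.sub (((hasFDerivAt_id x).inner ℝ (hasFDerivAt_gradient hw)).const_mul
    (1 / 2))).congr_fderiv ?_
  ext p
  have hsymm : ⟪hess w x p, x⟫ = ⟪p, hess w x x⟫ := isSymmetric_hess hw p x
  simp [← real_inner_comm x, ← real_inner_comm p, hsymm]
  ring

lemma contDiffAt_eulerDefect {w : E → ℝ} {x : E} (hw : ContDiffAt ℝ 2 w x) :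
    ContDiffAt ℝ 1 (eulerDefect w) x :=
  (hw.of_le one_le_two).sub (contDiffAt_const.mul
    (contDiffAt_id.inner ℝ (contDiffAt_gradient hw (by norm_num))))

/-- `κ Δ a - ½ ⟨y, ∇ a⟩ = ℓ` on `U`, the derivatives being understood in the approximate sense of
`HasApproxLaplacianOn`. -/
def HasDriftLaplacianOn (κ : ℝ) (U : Set E) (a ℓ : E → ℝ) : Prop :=
  ∃ (g : E → E) (c : E → ℝ), HasApproxLaplacianOn U a g c ∧
    ∀ y ∈ U, κ * c y - (1 / 2) * ⟪y, g y⟫ = ℓ y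

namespace HasDriftLaplacianOn

variable {κ : ℝ} {U : Set E} {a a' ℓ ℓ' : E → ℝ}

lemma add (h : HasDriftLaplacianOn κ U a ℓ) (h' : HasDriftLaplacianOn κ U a' ℓ') :
    HasDriftLaplacianOn κ U (a + a') (ℓ + ℓ') := by
  obtain ⟨g, c, hF, hℓ⟩ := h
  obtain ⟨g', c', hF', hℓ'⟩ := h'
  refine ⟨_, _, hF.add hF', fun y hy => ?_⟩
  simp only [Pi.add_apply, inner_add_right, ← hℓ y hy, ← hℓ' y hy]
  ring

lemma const_mul (h : HasDriftLaplacianOn κ U a ℓ) (r : ℝ) :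
    HasDriftLaplacianOn κ U (fun y => r * a y) (fun y => r * ℓ y) := by
  obtain ⟨g, c, hF, hℓ⟩ := h
  refine ⟨_, _, hF.const_mul r, fun y hy => ?_⟩
  simp only [inner_smul_right, ← hℓ y hy]
  ring

lemma nonneg_of_isLocalMin (hU : IsOpen U) (hκ : 0 ≤ κ) (h : HasDriftLaplacianOn κ U a ℓ) {y : E}
    (hy : y ∈ U) (hmin : IsLocalMin a y) : 0 ≤ ℓ y := by
  obtain ⟨g, c, hF, hℓ⟩ := h
  obtain ⟨hg, hc⟩ := hF.of_isLocalMin hU hy hmin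
  rw [← hℓ y hy, hg, inner_zero_right, mul_zero, sub_zero]
  positivity

end HasDriftLaplacianOn

/-- `v` is an eigenfunction of the drift Laplacian: `κ Δ v - ½ ⟨y, ∇ v⟩ = -v` on the open set
`U`. The Legendre transform of a solution of the shrinker equation is one. -/
structure IsDriftEigenfunction (κ : ℝ) (U : Set E) (v : E → ℝ) : Prop where
  isOpen : IsOpen U
  contDiffOn : ContDiffOn ℝ 2 v U
  laplacian_eq : ∀ y ∈ U, κ * Δ v y = -eulerDefect v y

namespace IsDriftEigenfunction

variable {κ : ℝ} {U : Set E} {v : E → ℝ} {y : E}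

lemma contDiffAt (hv : IsDriftEigenfunction κ U v) (hy : y ∈ U) : ContDiffAt ℝ 2 v y :=
  hv.contDiffOn.contDiffAt (hv.isOpen.mem_nhds hy)

lemma laplacian_eventuallyEq (hv : IsDriftEigenfunction κ U v) (hκ : κ ≠ 0) (hy : y ∈ U) :
    Δ v =ᶠ[𝓝 y] (-κ⁻¹) • eulerDefect v := by
  filter_upwards [hv.isOpen.mem_nhds hy] with z hz
  rw [Pi.smul_apply, smul_eq_mul, neg_mul, ← mul_neg, ← hv.laplacian_eq z hz,
    inv_mul_cancel_left₀ hκ]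

lemma contDiffOn_laplacian (hv : IsDriftEigenfunction κ U v) (hκ : κ ≠ 0) :
    ContDiffOn ℝ 1 (Δ v) U := fun y hy => by
  have hsmul : ContDiffAt ℝ 1 ((-κ⁻¹) • eulerDefect v) y :=
    contDiffAt_const.smul (contDiffAt_eulerDefect (hv.contDiffAt hy))
  exact (hsmul.congr_of_eventuallyEq (hv.laplacian_eventuallyEq hκ hy)).contDiffWithinAt

lemma smul_gradient_laplacian (hv : IsDriftEigenfunction κ U v) (hκ : κ ≠ 0) (hy : y ∈ U) :
    κ • ∇ (Δ v) y = (1 / 2 : ℝ) • (hess v y y - ∇ v y) := by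
  rw [(hv.laplacian_eventuallyEq hκ hy).gradient_eq,
    (hasGradientAt_const_smul (hasGradientAt_eulerDefect (hv.contDiffAt hy)) _).gradient,
    smul_smul, mul_neg, mul_inv_cancel₀ hκ, neg_one_smul, ← smul_neg, neg_sub]

lemma hasDriftLaplacianOn_neg_eulerDefect (hv : IsDriftEigenfunction κ U v) (hκ : κ ≠ 0) :
    HasDriftLaplacianOn κ U (-eulerDefect v) 0 := by
  have hinner := HasApproxLaplacianOn.inner_gradient_smul_add hv.isOpen hv.contDiffOn
    (hv.contDiffOn_laplacian hκ) 1 0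
  have hv' := HasApproxLaplacianOn.of_contDiffOn hv.isOpen hv.contDiffOn
  refine ⟨fun y => κ • ∇ (Δ v) y, fun y => (1 / 2) * ⟪∇ (Δ v) y, y⟫,
    ((hinner.const_mul (1 / 2)).add (hv'.const_mul (-1))).congr (fun y _ => ?_) (fun y hy => ?_)
      (fun y _ => ?_), fun y _ => ?_⟩
  · simp only [eulerDefect, one_smul, add_zero, Pi.add_apply, Pi.neg_apply, real_inner_comm y]
    ring
  · rw [hv.smul_gradient_laplacian hκ hy]
    simp only [one_smul, add_zero, Pi.add_apply]
    module
  · simp only [one_smul, add_zero, Pi.add_apply]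
    ring
  · simp only [inner_smul_right, real_inner_comm y, Pi.zero_apply]
    ring

lemma hasDriftLaplacianOn_sq (hv : IsDriftEigenfunction κ U v) :
    HasDriftLaplacianOn κ U (fun y => v y ^ 2) (fun y => 2 * κ * ‖∇ v y‖ ^ 2 - 2 * v y ^ 2) := by
  refine ⟨_, _, (HasApproxLaplacianOn.of_contDiffOn hv.isOpen hv.contDiffOn).sq, fun y hy => ?_⟩
  have := hv.laplacian_eq y hy
  rw [eulerDefect] at this
  rw [inner_smul_right]
  linear_combination 2 * v y * this

lemma hasDriftLaplacianOn_norm_gradient_sq (hv : IsDriftEigenfunction κ U v) (hκ : κ ≠ 0) :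
    HasDriftLaplacianOn κ U (fun y => ‖∇ v y‖ ^ 2)
      (fun y => 2 * κ * traceL (hess v y * hess v y) - ‖∇ v y‖ ^ 2) := by
  refine ⟨_, _, HasApproxLaplacianOn.norm_gradient_sq hv.isOpen hv.contDiffOn
    (hv.contDiffOn_laplacian hκ), fun y hy => ?_⟩
  have hsymm : ⟪hess v y y, ∇ v y⟫ = ⟪y, hess v y (∇ v y)⟫ :=
    isSymmetric_hess (hv.contDiffAt hy) _ _
  have hthird : κ * ⟪∇ (Δ v) y, ∇ v y⟫ = 1 / 2 * (⟪y, hess v y (∇ v y)⟫ - ‖∇ v y‖ ^ 2) := by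
    rw [← real_inner_smul_left, hv.smul_gradient_laplacian hκ hy, real_inner_smul_left,
      inner_sub_left, hsymm, real_inner_self_eq_norm_sq]
  rw [inner_smul_right]
  linear_combination 2 * hthird

end IsDriftEigenfunction

lemma traceL_mul_self_le_sq {B : E →L[ℝ] E} (hB : B.IsPositive) :
    traceL (B * B) ≤ traceL B ^ 2 := by
  have hsymm : (B : E →ₗ[ℝ] E).IsSymmetric := hB.isSymmetric
  let b := hsymm.eigenvectorBasis rfl
  have hBb (i) : B (b i) = hsymm.eigenvalues rfl i • b i := hsymm.apply_eigenvectorBasis rfl i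
  have hnonneg (i) : 0 ≤ hsymm.eigenvalues rfl i := by
    have := hB.inner_nonneg_left (b i)
    simpa [hBb, inner_smul_left] using this
  have htr : traceL B = ∑ i, hsymm.eigenvalues rfl i := by
    simp [traceL_eq_sum_inner _ b, hBb, inner_smul_left]
  have htr₂ : traceL (B * B) = ∑ i, hsymm.eigenvalues rfl i ^ 2 := by
    simp [traceL_eq_sum_inner _ b, hBb, inner_smul_left, sq]
  rw [htr, htr₂]
  exact Finset.sum_sq_le_sq_sum_of_nonneg fun i _ => hnonneg i

/-! ### The strong minimum principle -/

lemma exists_gaussian_pos {F : Type*} [NormedAddCommGroup F] [InnerProductSpace ℝ F] {κ δ : ℝ}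
    (hκ : 0 < κ) (hδ : 0 < δ) (d : ℕ) (c : F) :
    ∃ α > 0, ∀ y, δ ≤ ‖y - c‖ →
      0 < 4 * κ * α ^ 2 * ‖y - c‖ ^ 2 - 2 * κ * α * d + α * ⟪y, y - c⟫ := by
  set A : ℝ := 2 * κ * d + ‖c‖ ^ 2 / 4 with hA
  refine ⟨(A + 1) / (4 * κ * δ ^ 2), by positivity, fun y hy => ?_⟩
  set α : ℝ := (A + 1) / (4 * κ * δ ^ 2)
  have hα : 0 < α := by positivity
  have hαδ : 4 * κ * α * δ ^ 2 = A + 1 := by simp only [α]; field_simp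
  have hfar : 4 * κ * α * δ ^ 2 ≤ 4 * κ * α * ‖y - c‖ ^ 2 := by gcongr
  have hsquare : 0 ≤ ⟪y, y - c⟫ + ‖c‖ ^ 2 / 4 := by
    have : ⟪y, y - c⟫ + ‖c‖ ^ 2 / 4 = ‖y - (1 / 2 : ℝ) • c‖ ^ 2 := by
      rw [norm_sub_sq_real, inner_sub_right, real_inner_self_eq_norm_sq, inner_smul_right,
        norm_smul]
      norm_num
      ring
    rw [this]
    positivity
  have hfactor : 0 < 4 * κ * α * ‖y - c‖ ^ 2 - 2 * κ * d + ⟪y, y - c⟫ := by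
    linarith
  linear_combination α * hfactor

namespace HasDriftLaplacianOn

variable {κ : ℝ} {U : Set E} {a ℓ : E → ℝ}

lemma gaussian (κ : ℝ) (hU : IsOpen U) (α : ℝ) (c : E) :
    HasDriftLaplacianOn κ U (fun y => Real.exp (-α * ‖y - c‖ ^ 2)) (fun y =>
      Real.exp (-α * ‖y - c‖ ^ 2) * (4 * κ * α ^ 2 * ‖y - c‖ ^ 2 -
        2 * κ * α * Module.finrank ℝ E + α * ⟪y, y - c⟫)) := by
  have hquad := HasApproxLaplacianOn.of_contDiffOn (a := fun y => ‖y - c‖ ^ 2) hU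
    ((contDiff_id.sub contDiff_const).norm_sq ℝ).contDiffOn
  refine ⟨_, _, hquad.comp (φ := fun t => Real.exp (-α * t)) (by fun_prop), fun y _ => ?_⟩
  have hderiv : deriv (fun t => Real.exp (-α * t)) = fun t => -α * Real.exp (-α * t) := by
    ext t
    rw [deriv_exp (by fun_prop)]
    simp [mul_comm]
  have hderiv₂ : deriv (fun t => -α * Real.exp (-α * t)) =
      fun t => α ^ 2 * Real.exp (-α * t) := by
    ext t
    rw [deriv_const_mul_field, hderiv]
    ring
  simp only [hderiv, hderiv₂, laplacian_norm_sub_sq, (hasGradientAt_norm_sub_sq c y).gradient,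
    inner_smul_right, norm_smul, mul_pow]
  norm_num
  ring

/-- Away from `c` the drift Laplacian of `a - μ exp (-α ‖· - c‖²)` is negative, so its minimum over
the ball is attained near `c` or on the sphere. -/
lemma sub_exp_le_sub_gaussian (hU : IsOpen U) (hκ : 0 < κ) (h : HasDriftLaplacianOn κ U a ℓ)
    (ha : ContinuousOn a U) (hℓ : ∀ y ∈ U, ℓ y ≤ 0) {c : E} {R m μ α δ : ℝ}
    (hball : Metric.closedBall c R ⊆ U) (hm : ∀ y ∈ Metric.closedBall c R, m ≤ a y)
    (hμ : 0 < μ) (hα : 0 < α) (hnear : ∀ y, ‖y - c‖ < δ → m + μ < a y)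
    (hfar : ∀ y, δ ≤ ‖y - c‖ → 0 < 4 * κ * α ^ 2 * ‖y - c‖ ^ 2 -
      2 * κ * α * Module.finrank ℝ E + α * ⟪y, y - c⟫) :
    ∀ y ∈ Metric.closedBall c R,
      m - μ * Real.exp (-α * R ^ 2) ≤ a y - μ * Real.exp (-α * ‖y - c‖ ^ 2) := by
  intro y hy
  have hcont : ContinuousOn (fun z => a z - μ * Real.exp (-α * ‖z - c‖ ^ 2))
      (Metric.closedBall c R) := (ha.mono hball).sub (by fun_prop)
  obtain ⟨z, hz, hzmin⟩ := (isCompact_closedBall c R).exists_isMinOn ⟨y, hy⟩ hcont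
  refine le_trans ?_ (hzmin hy)
  by_contra! hlow
  have hzδ : δ ≤ ‖z - c‖ := by
    by_contra! hlt
    have hle : Real.exp (-α * ‖z - c‖ ^ 2) ≤ 1 :=
      Real.exp_le_one_iff.2 (by nlinarith [sq_nonneg ‖z - c‖])
    nlinarith [hnear z hlt, mul_pos hμ (Real.exp_pos (-α * R ^ 2))]
  have hzR : z ∈ Metric.ball c R := by
    refine (Metric.mem_closedBall.1 hz).lt_of_ne fun heq => ?_
    rw [← dist_eq_norm, heq] at hlow
    linarith [hm z hz]
  have hlocal : IsLocalMin (fun z => a z + -μ * Real.exp (-α * ‖z - c‖ ^ 2)) z := by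
    simpa only [neg_mul, ← sub_eq_add_neg] using
      hzmin.isLocalMin (mem_of_superset (Metric.isOpen_ball.mem_nhds hzR)
        Metric.ball_subset_closedBall)
  have hnonneg := (h.add ((gaussian κ hU α c).const_mul (-μ))).nonneg_of_isLocalMin hU hκ.le
    (hball hz) hlocal
  have hneg := mul_pos hμ (mul_pos (Real.exp_pos (-α * ‖z - c‖ ^ 2)) (hfar z hzδ))
  simp only [Pi.add_apply] at hnonneg
  linarith [hℓ z (hball hz)]

lemma lt_of_lt_center (hU : IsOpen U) (hκ : 0 < κ) (h : HasDriftLaplacianOn κ U a ℓ)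
    (ha : ContinuousOn a U) (hℓ : ∀ y ∈ U, ℓ y ≤ 0) {c : E} {R m : ℝ}
    (hball : Metric.closedBall c R ⊆ U) (hm : ∀ y ∈ Metric.closedBall c R, m ≤ a y)
    (hc : m < a c) : ∀ y ∈ Metric.ball c R, m < a y := by
  intro y hy
  obtain ⟨μ, hμ, hcμ⟩ : ∃ μ > 0, m + μ < a c := ⟨(a c - m) / 2, by linarith, by linarith⟩
  have hcU : U ∈ 𝓝 c :=
    hU.mem_nhds (hball (Metric.mem_closedBall_self (Metric.pos_of_mem_ball hy).le))
  obtain ⟨δ, hδ, hnear⟩ := Metric.eventually_nhds_iff.1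
    ((ha.continuousAt hcU).eventually_const_lt hcμ)
  obtain ⟨α, hα, hfar⟩ := exists_gaussian_pos hκ hδ (Module.finrank ℝ E) c
  have hbarrier := sub_exp_le_sub_gaussian hU hκ h ha hℓ hball hm hμ hα
    (fun z hz => hnear (by rwa [dist_eq_norm])) hfar y (Metric.ball_subset_closedBall hy)
  have hexp : Real.exp (-α * R ^ 2) < Real.exp (-α * ‖y - c‖ ^ 2) := by
    have : ‖y - c‖ ^ 2 < R ^ 2 := by rw [← dist_eq_norm]; gcongr; exact hy
    rw [Real.exp_lt_exp]
    nlinarith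
  nlinarith

theorem eventually_eq_of_isLocalMin (hU : IsOpen U) (hκ : 0 < κ)
    (h : HasDriftLaplacianOn κ U a ℓ) (ha : ContinuousOn a U) (hℓ : ∀ y ∈ U, ℓ y ≤ 0) {y : E}
    (hy : y ∈ U) (hmin : IsLocalMin a y) : ∀ᶠ z in 𝓝 y, a z = a y := by
  obtain ⟨r, hr, hball⟩ := Metric.eventually_nhds_iff_ball.1 ((hU.eventually_mem hy).and hmin)
  filter_upwards [Metric.ball_mem_nhds y (half_pos hr)] with z hz
  have hsub : Metric.closedBall z (r / 2) ⊆ Metric.ball y r :=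
    Metric.closedBall_subset_ball' (by linarith [Metric.mem_ball.1 hz])
  refine le_antisymm (not_lt.1 fun hlt => ?_) (hball z ?_).2
  · exact lt_irrefl _ (lt_of_lt_center hU hκ h ha hℓ (fun p hp => (hball p (hsub hp)).1)
      (fun p hp => (hball p (hsub hp)).2) hlt y (Metric.mem_ball_comm.1 hz))
  · exact Metric.ball_subset_ball (half_le_self hr.le) hz

end HasDriftLaplacianOn

/-! ### Local Legendre transforms -/

lemma contDiffOn_two_of_hasGradientAt {U : Set E} {v : E → ℝ} {X : E → E} (hU : IsOpen U)
    (hX : ContDiffOn ℝ 1 X U) (hv : ∀ y ∈ U, HasGradientAt v (X y) y) : ContDiffOn ℝ 2 v U := by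
  rw [← one_add_one_eq_two, contDiffOn_succ_iff_fderiv_of_isOpen hU]
  refine ⟨fun y hy => (hv y hy).differentiableAt.differentiableWithinAt, by simp, ?_⟩
  exact ((InnerProductSpace.toDual ℝ E).contDiff.comp_contDiffOn hX).congr
    fun y hy => (hv y hy).hasFDerivAt.fderiv

lemma hasGradientAt_legendre_comp {w : E → ℝ} {X : E → E} {y : E} {B : E →L[ℝ] E}
    (hX : HasFDerivAt X B y) (hw : HasGradientAt w y (X y)) :
    HasGradientAt (fun z => ⟪z, X z⟫ - w (X z)) (X y) y := by
  rw [hasGradientAt_iff_hasFDerivAt] at hw ⊢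
  refine (((hasFDerivAt_id y).inner ℝ hX).sub (hw.comp y hX)).congr_fderiv ?_
  ext p
  simp [real_inner_comm p]

/-- On the open set `U`, the function `v` is the Legendre transform of a branch of `w` on `Ω`:
`∇ v` is a local inverse of `∇ w`, and `v y = ⟨y, ∇ v y⟩ - w (∇ v y)`. -/
structure IsLocalLegendre (Ω : Set E) (w : E → ℝ) (U : Set E) (v : E → ℝ) : Prop where
  isOpen : IsOpen U
  contDiffOn : ContDiffOn ℝ 2 v U
  gradient_mem : ∀ y ∈ U, ∇ v y ∈ Ω
  gradient_gradient : ∀ y ∈ U, ∇ w (∇ v y) = y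
  apply_eq : ∀ y ∈ U, v y = ⟪y, ∇ v y⟫ - w (∇ v y)

theorem exists_isLocalLegendre {Ω : Set E} {w : E → ℝ} (hΩ : IsOpen Ω) (hw : ContDiffOn ℝ 2 w Ω)
    (hunit : ∀ x ∈ Ω, IsUnit (hess w x)) {x₁ : E} (hx₁ : x₁ ∈ Ω) :
    ∃ (U : Set E) (v : E → ℝ), IsLocalLegendre Ω w U v ∧ ∇ w x₁ ∈ U ∧
      ∀ᶠ x in 𝓝 x₁, ∇ v (∇ w x) = x := by
  have hwAt {x : E} (hx : x ∈ Ω) : ContDiffAt ℝ 2 w x := hw.contDiffAt (hΩ.mem_nhds hx)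
  have hgrad {x : E} (hx : x ∈ Ω) : ContDiffAt ℝ 1 (∇ w) x :=
    contDiffAt_gradient (hwAt hx) (by norm_num)
  have hderiv {x : E} (hx : x ∈ Ω) :
      ∃ e : E ≃L[ℝ] E, HasFDerivAt (∇ w) (e : E →L[ℝ] E) x :=
    ⟨ContinuousLinearEquiv.ofUnit (hunit x hx).unit, hasFDerivAt_gradient (hwAt hx)⟩
  obtain ⟨e, he⟩ := hderiv hx₁
  let φ := (hgrad hx₁).toOpenPartialHomeomorph (∇ w) he one_ne_zero
  have hx₁φ : x₁ ∈ φ.source := (hgrad hx₁).mem_toOpenPartialHomeomorph_source he one_ne_zero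
  let U := φ.target ∩ φ.symm ⁻¹' Ω
  have hU : IsOpen U := φ.isOpen_inter_preimage_symm hΩ
  have hsymm : ContDiffOn ℝ 1 φ.symm U := fun y hy => by
    obtain ⟨e', he'⟩ := hderiv hy.2
    exact (φ.contDiffAt_symm hy.1 he' (hgrad hy.2)).contDiffWithinAt
  have hinv (y : E) (hy : y ∈ U) : ∇ w (φ.symm y) = y := φ.right_inv hy.1
  let v (y : E) : ℝ := ⟪y, φ.symm y⟫ - w (φ.symm y)
  have hv (y : E) (hy : y ∈ U) : HasGradientAt v (φ.symm y) y := by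
    refine hasGradientAt_legendre_comp
      ((hsymm.contDiffAt (hU.mem_nhds hy)).differentiableAt one_ne_zero).hasFDerivAt ?_
    simpa only [hinv y hy] using hasGradientAt_gradient (hwAt hy.2)
  have hleft (x : E) (hx : x ∈ φ.source) : φ.symm (∇ w x) = x := φ.left_inv hx
  have hmaps (x : E) (hx : x ∈ φ.source) (hxΩ : x ∈ Ω) : ∇ w x ∈ U :=
    ⟨φ.map_source hx, by rwa [mem_preimage, hleft x hx]⟩
  refine ⟨U, v, ⟨hU, contDiffOn_two_of_hasGradientAt hU hsymm hv, fun y hy => ?_, fun y hy => ?_,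
    fun y hy => ?_⟩, hmaps x₁ hx₁φ hx₁, ?_⟩
  · exact (hv y hy).gradient ▸ hy.2
  · exact (hv y hy).gradient ▸ hinv y hy
  · rw [(hv y hy).gradient]
  · filter_upwards [φ.open_source.mem_nhds hx₁φ, hΩ.mem_nhds hx₁] with x hx hxΩ
    rw [(hv _ (hmaps x hx hxΩ)).gradient, hleft x hx]

namespace IsLocalLegendre

variable {Ω U : Set E} {w v : E → ℝ} {y : E}

lemma contDiffAt (h : IsLocalLegendre Ω w U v) (hy : y ∈ U) : ContDiffAt ℝ 2 v y :=
  h.contDiffOn.contDiffAt (h.isOpen.mem_nhds hy)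

lemma hess_mul_hess (h : IsLocalLegendre Ω w U v) (hy : y ∈ U)
    (hw : ContDiffAt ℝ 2 w (∇ v y)) : hess w (∇ v y) * hess v y = 1 := by
  have hcomp : HasFDerivAt (∇ w ∘ ∇ v) (hess w (∇ v y) * hess v y) y :=
    (hasFDerivAt_gradient hw).comp y (hasFDerivAt_gradient (h.contDiffAt hy))
  have hid : ∇ w ∘ ∇ v =ᶠ[𝓝 y] id :=
    (h.isOpen.eventually_mem hy).mono fun z hz => h.gradient_gradient z hz
  exact hcomp.unique ((hasFDerivAt_id y).congr_of_eventuallyEq hid)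

lemma hess_eq_inverse (h : IsLocalLegendre Ω w U v) (hy : y ∈ U)
    (hw : ContDiffAt ℝ 2 w (∇ v y)) (hunit : IsUnit (hess w (∇ v y))) :
    hess v y = (hess w (∇ v y))⁻¹ʳ := by
  rw [← mul_one (hess w (∇ v y))⁻¹ʳ, ← h.hess_mul_hess hy hw,
    Ring.inverse_mul_cancel_left _ _ hunit]

lemma eulerDefect_gradient (h : IsLocalLegendre Ω w U v) (hy : y ∈ U) :
    eulerDefect w (∇ v y) = -eulerDefect v y := by
  rw [eulerDefect, eulerDefect, h.gradient_gradient y hy, h.apply_eq y hy, real_inner_comm]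
  ring

end IsLocalLegendre

/-! ### The shrinker equation -/

/-- `w` is strictly convex on the open set `Ω` and solves `w - ½ ⟨x, ∇ w⟩ = κ tr (∇² w)⁻¹` there.
The equation of the theorem takes this form for `w = u + ½ ‖x‖²` and `κ = √2`. -/
structure IsShrinkerPotential (κ : ℝ) (Ω : Set E) (w : E → ℝ) : Prop where
  isOpen : IsOpen Ω
  contDiffOn : ContDiffOn ℝ 2 w Ω
  inner_hess_pos : ∀ x ∈ Ω, ∀ p ≠ 0, 0 < ⟪hess w x p, p⟫
  eulerDefect_eq : ∀ x ∈ Ω, eulerDefect w x = κ * traceL (hess w x)⁻¹ʳ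

lemma isUnit_of_inner_ne_zero {A : E →L[ℝ] E} (hA : ∀ p ≠ 0, ⟪A p, p⟫ ≠ 0) : IsUnit A := by
  have hinj : Function.Injective A := (injective_iff_map_eq_zero A).2 fun p hp => by
    by_contra hp₀
    exact hA p hp₀ (by rw [hp, inner_zero_left])
  exact ContinuousLinearMap.isUnit_iff_bijective.2
    ⟨hinj, LinearMap.injective_iff_surjective.1 hinj⟩

lemma isPositive_inverse {A : E →L[ℝ] E} (hsymm : (A : E →ₗ[ℝ] E).IsSymmetric)
    (hA : ∀ p ≠ 0, 0 < ⟪A p, p⟫) : (A⁻¹ʳ).IsPositive := by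
  have hunit := isUnit_of_inner_ne_zero fun p hp => (hA p hp).ne'
  have hinv (p : E) : A (A⁻¹ʳ p) = p := DFunLike.congr_fun (Ring.mul_inverse_cancel A hunit) p
  rw [ContinuousLinearMap.isPositive_iff]
  refine ⟨fun p q => ?_, fun p => ?_⟩
  · have := hsymm (A⁻¹ʳ p) (A⁻¹ʳ q)
    simpa only [ContinuousLinearMap.coe_coe, hinv] using this.symm
  · rcases eq_or_ne (A⁻¹ʳ p) 0 with hp | hp
    · rw [hp, inner_zero_left]
    · simpa only [hinv, real_inner_comm] using (hA _ hp).le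

namespace IsShrinkerPotential

variable {κ : ℝ} {Ω U : Set E} {w v : E → ℝ} {x y : E}

lemma contDiffAt (hw : IsShrinkerPotential κ Ω w) (hx : x ∈ Ω) : ContDiffAt ℝ 2 w x :=
  hw.contDiffOn.contDiffAt (hw.isOpen.mem_nhds hx)

lemma isUnit_hess (hw : IsShrinkerPotential κ Ω w) (hx : x ∈ Ω) : IsUnit (hess w x) :=
  isUnit_of_inner_ne_zero fun p hp => (hw.inner_hess_pos x hx p hp).ne'

lemma isPositive_inverse_hess (hw : IsShrinkerPotential κ Ω w) (hx : x ∈ Ω) :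
    ((hess w x)⁻¹ʳ).IsPositive :=
  isPositive_inverse (isSymmetric_hess (hw.contDiffAt hx)) (hw.inner_hess_pos x hx)

lemma continuousOn_gradient (hw : IsShrinkerPotential κ Ω w) : ContinuousOn (∇ w) Ω :=
  fun _ hx => (hasFDerivAt_gradient (hw.contDiffAt hx)).continuousAt.continuousWithinAt

lemma eulerDefect_nonneg (hw : IsShrinkerPotential κ Ω w) (hκ : 0 ≤ κ) (hx : x ∈ Ω) :
    0 ≤ eulerDefect w x := by
  rw [hw.eulerDefect_eq x hx, traceL_apply]
  exact mul_nonneg hκ (hw.isPositive_inverse_hess hx).toLinearMap.trace_nonneg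

lemma hess_legendre (hw : IsShrinkerPotential κ Ω w) (hv : IsLocalLegendre Ω w U v) (hy : y ∈ U) :
    hess v y = (hess w (∇ v y))⁻¹ʳ :=
  hv.hess_eq_inverse hy (hw.contDiffAt (hv.gradient_mem y hy))
    (hw.isUnit_hess (hv.gradient_mem y hy))

lemma isDriftEigenfunction (hw : IsShrinkerPotential κ Ω w) (hv : IsLocalLegendre Ω w U v) :
    IsDriftEigenfunction κ U v where
  isOpen := hv.isOpen
  contDiffOn := hv.contDiffOn
  laplacian_eq y hy := by
    rw [laplacian_eq_traceL_hess, hw.hess_legendre hv hy,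
      ← hw.eulerDefect_eq _ (hv.gradient_mem y hy), hv.eulerDefect_gradient hy]

lemma exists_isLocalLegendre (hw : IsShrinkerPotential κ Ω w) (hx : x ∈ Ω) :
    ∃ (U : Set E) (v : E → ℝ), IsLocalLegendre Ω w U v ∧ ∇ w x ∈ U ∧
      ∀ᶠ z in 𝓝 x, ∇ v (∇ w z) = z :=
  _root_.exists_isLocalLegendre hw.isOpen hw.contDiffOn (fun _ hz => hw.isUnit_hess hz) hx

end IsShrinkerPotential

/-! ### The Euler defect attains its minimum -/

lemma HasDriftLaplacianOn.norm_sq (κ : ℝ) {U : Set E} (hU : IsOpen U) :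
    HasDriftLaplacianOn κ U (fun y => ‖y‖ ^ 2)
      (fun y => 2 * κ * Module.finrank ℝ E - ‖y‖ ^ 2) := by
  refine ⟨_, _, HasApproxLaplacianOn.of_contDiffOn hU (contDiff_norm_sq ℝ).contDiffOn,
    fun y _ => ?_⟩
  have hgrad := (hasGradientAt_norm_sub_sq 0 y).gradient
  have hlap := laplacian_norm_sub_sq 0 y
  simp only [sub_zero] at hgrad hlap
  rw [hgrad, hlap, inner_smul_right, real_inner_self_eq_norm_sq]
  ring

/-- The factor `2 κ + 1` lets the term `-‖∇ v‖²` of the drift Laplacian absorb the contribution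
`2 κ ‖∇ v‖²` of `v²`. -/
lemma IsDriftEigenfunction.hasDriftLaplacianOn_penalty {κ : ℝ} {U : Set E} {v : E → ℝ}
    (hv : IsDriftEigenfunction κ U v) (hκ : κ ≠ 0) :
    HasDriftLaplacianOn κ U (fun y => v y ^ 2 + (2 * κ + 1) * ‖∇ v y‖ ^ 2 + ‖y‖ ^ 2) (fun y =>
      2 * κ * (2 * κ + 1) * traceL (hess v y * hess v y) + 2 * κ * Module.finrank ℝ E -
        (2 * v y ^ 2 + ‖∇ v y‖ ^ 2 + ‖y‖ ^ 2)) := by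
  obtain ⟨g, c, hF, hℓ⟩ := (hv.hasDriftLaplacianOn_sq.add
    ((hv.hasDriftLaplacianOn_norm_gradient_sq hκ).const_mul (2 * κ + 1))).add
    (HasDriftLaplacianOn.norm_sq κ hv.isOpen)
  refine ⟨g, c, hF, fun y hy => (hℓ y hy).trans ?_⟩
  simp only [Pi.add_apply]
  ring

lemma IsDriftEigenfunction.penalty_le_of_isLocalMin {κ ε : ℝ} {U : Set E} {v : E → ℝ} {y : E}
    (hv : IsDriftEigenfunction κ U v) (hκ : 0 < κ) (hε : 0 < ε) (hy : y ∈ U)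
    (hpos : (hess v y).IsPositive)
    (hmin : IsLocalMin (fun y => -eulerDefect v y +
      ε * (v y ^ 2 + (2 * κ + 1) * ‖∇ v y‖ ^ 2 + ‖y‖ ^ 2)) y) :
    2 * v y ^ 2 + ‖∇ v y‖ ^ 2 + ‖y‖ ^ 2 ≤
      2 * (2 * κ + 1) / κ * eulerDefect v y ^ 2 + 2 * κ * Module.finrank ℝ E := by
  have hdrift := (hv.hasDriftLaplacianOn_neg_eulerDefect hκ.ne').add
    ((hv.hasDriftLaplacianOn_penalty hκ.ne').const_mul ε)
  have hnonneg := hdrift.nonneg_of_isLocalMin hv.isOpen hκ.le hy hmin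
  simp only [Pi.add_apply, Pi.zero_apply, zero_add] at hnonneg
  have hpenalty := nonneg_of_mul_nonneg_right hnonneg hε
  have htrace : traceL (hess v y) = -(κ⁻¹ * eulerDefect v y) := by
    rw [← mul_neg, ← hv.laplacian_eq y hy, laplacian_eq_traceL_hess, inv_mul_cancel_left₀ hκ.ne']
  have hsq := mul_le_mul_of_nonneg_left (traceL_mul_self_le_sq hpos)
    (by positivity : 0 ≤ 2 * κ * (2 * κ + 1))
  have hcoeff : 2 * κ * (2 * κ + 1) * traceL (hess v y) ^ 2 =
      2 * (2 * κ + 1) / κ * eulerDefect v y ^ 2 := by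
    rw [htrace]
    field_simp
  linarith

/-- The Legendre transform of `w`, as a function of `x` rather than of the slope `∇ w x`. -/
def legendre (w : E → ℝ) (x : E) : ℝ := ⟪∇ w x, x⟫ - w x

/-- The penalty term added to the Euler defect to make its infimum attained; under the Legendre
transform it becomes the function of `IsDriftEigenfunction.hasDriftLaplacianOn_penalty`. -/
def penalty (κ : ℝ) (w : E → ℝ) (x : E) : ℝ :=
  legendre w x ^ 2 + (2 * κ + 1) * ‖x‖ ^ 2 + ‖∇ w x‖ ^ 2

lemma IsLocalLegendre.legendre_gradient {Ω U : Set E} {w v : E → ℝ} {y : E}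
    (h : IsLocalLegendre Ω w U v) (hy : y ∈ U) : legendre w (∇ v y) = v y := by
  rw [legendre, h.gradient_gradient y hy, h.apply_eq y hy]

lemma IsShrinkerPotential.penalty_le_of_isLocalMin {κ ε : ℝ} {Ω : Set E} {w : E → ℝ} {x : E}
    (hw : IsShrinkerPotential κ Ω w) (hκ : 0 < κ) (hε : 0 < ε) (hx : x ∈ Ω)
    (hmin : IsLocalMin (fun z => eulerDefect w z + ε * penalty κ w z) x) :
    penalty κ w x ≤ (2 * κ + 1) * (2 * (2 * κ + 1) / κ * eulerDefect w x ^ 2 +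
      2 * κ * Module.finrank ℝ E) := by
  obtain ⟨U, v, hv, hxU, hleft⟩ := hw.exists_isLocalLegendre hx
  have hx' : ∇ v (∇ w x) = x := hleft.self_of_nhds
  have hcont : ContinuousAt (∇ v) (∇ w x) :=
    (hasFDerivAt_gradient (hv.contDiffAt hxU)).continuousAt
  have hmin' : IsLocalMin (fun y => -eulerDefect v y +
      ε * (v y ^ 2 + (2 * κ + 1) * ‖∇ v y‖ ^ 2 + ‖y‖ ^ 2)) (∇ w x) := by
    have hpull : IsLocalMin ((fun z => eulerDefect w z + ε * penalty κ w z) ∘ ∇ v) (∇ w x) :=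
      (hx'.symm ▸ hmin).comp_tendsto hcont
    refine hpull.congr ((hv.isOpen.eventually_mem hxU).mono fun y hy => ?_)
    simp only [Function.comp_apply, penalty, hv.eulerDefect_gradient hy,
      hv.legendre_gradient hy, hv.gradient_gradient y hy]
  have hpos : (hess v (∇ w x)).IsPositive := by
    rw [hw.hess_legendre hv hxU]
    exact hw.isPositive_inverse_hess (hv.gradient_mem _ hxU)
  have hle := (hw.isDriftEigenfunction hv).penalty_le_of_isLocalMin hκ hε hxU hpos hmin'
  have hdefect := hv.eulerDefect_gradient hxU
  have hleg := hv.legendre_gradient hxU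
  rw [hx'] at hdefect hleg hle
  rw [← neg_sq (eulerDefect v _), ← hdefect, ← hleg] at hle
  refine le_trans ?_ (mul_le_mul_of_nonneg_left hle (by positivity))
  rw [penalty]
  nlinarith [sq_nonneg (legendre w x), sq_nonneg ‖∇ w x‖, mul_nonneg hκ.le (sq_nonneg ‖∇ w x‖),
    mul_nonneg hκ.le (sq_nonneg (legendre w x))]

lemma exists_isMinOn_add_mul {X : Type*} [TopologicalSpace X] {s : Set X} {θ ψ : X → ℝ} {ε : ℝ}
    (hne : s.Nonempty) (hθ : ContinuousOn θ s) (hψ : ContinuousOn ψ s)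
    (hθ₀ : ∀ x ∈ s, 0 ≤ θ x) (hψ₀ : ∀ x ∈ s, 0 ≤ ψ x)
    (hcompact : ∀ R, IsCompact {x ∈ s | θ x ≤ R ∧ ψ x ≤ R}) (hε : 0 < ε) :
    ∃ x ∈ s, IsMinOn (fun z => θ z + ε * ψ z) s x := by
  obtain ⟨x₀, hx₀⟩ := hne
  set T := θ x₀ + ε * ψ x₀
  have hsub (x : X) (hx : x ∈ s) (hle : θ x + ε * ψ x ≤ T) :
      x ∈ {x ∈ s | θ x ≤ max T (T / ε) ∧ ψ x ≤ max T (T / ε)} := by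
    have h₁ := hθ₀ x hx
    have h₂ := mul_nonneg hε.le (hψ₀ x hx)
    exact ⟨hx, le_max_of_le_left (by linarith),
      le_max_of_le_right ((le_div_iff₀' hε).2 (by linarith))⟩
  obtain ⟨x, hx, hmin⟩ := (hcompact _).exists_isMinOn ⟨x₀, hsub x₀ hx₀ le_rfl⟩
    ((hθ.add (hψ.const_smul ε)).mono (sep_subset _ _))
  refine ⟨x, hx.1, fun z hz => ?_⟩
  rcases le_total (θ z + ε * ψ z) T with hle | hle
  · exact hmin (hsub z hz hle)
  · exact (hmin (hsub x₀ hx₀ le_rfl)).trans hle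

/-- Minimise `θ + ε ψ` and let `ε → 0`: the a priori bound keeps the minimisers in one compact
set. -/
theorem exists_isMinOn_of_penalization {X : Type*} [TopologicalSpace X] {s : Set X} {θ ψ : X → ℝ}
    (hne : s.Nonempty) (hθ : ContinuousOn θ s) (hψ : ContinuousOn ψ s)
    (hθ₀ : ∀ x ∈ s, 0 ≤ θ x) (hψ₀ : ∀ x ∈ s, 0 ≤ ψ x)
    (hcompact : ∀ R, IsCompact {x ∈ s | θ x ≤ R ∧ ψ x ≤ R})
    (hbound : ∀ M, ∃ C, ∀ ε > 0, ∀ x ∈ s, IsMinOn (fun z => θ z + ε * ψ z) s x →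
      θ x ≤ M → ψ x ≤ C) :
    ∃ x ∈ s, IsMinOn θ s x := by
  obtain ⟨x₀, hx₀⟩ := hne
  have : Nonempty X := ⟨x₀⟩
  have hpen (ε : ℝ) (hε : 0 < ε) : ∃ x ∈ s, IsMinOn (fun z => θ z + ε * ψ z) s x :=
    exists_isMinOn_add_mul ⟨x₀, hx₀⟩ hθ hψ hθ₀ hψ₀ hcompact hε
  choose! xε hxε hminε using hpen
  have hθε (ε : ℝ) (hε : ε ∈ Ioc (0 : ℝ) 1) (z : X) (hz : z ∈ s) : θ (xε ε) ≤ θ z + ε * ψ z := by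
    have h₁ : θ (xε ε) + ε * ψ (xε ε) ≤ θ z + ε * ψ z := hminε ε hε.1 hz
    have h₂ := mul_nonneg hε.1.le (hψ₀ _ (hxε ε hε.1))
    linarith
  have hθM (ε : ℝ) (hε : ε ∈ Ioc (0 : ℝ) 1) : θ (xε ε) ≤ θ x₀ + ψ x₀ :=
    (hθε ε hε x₀ hx₀).trans (by nlinarith [hψ₀ x₀ hx₀, hε.2])
  obtain ⟨C, hC⟩ := hbound (θ x₀ + ψ x₀)
  have hmem (ε : ℝ) (hε : ε ∈ Ioc (0 : ℝ) 1) :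
      xε ε ∈ {x ∈ s | θ x ≤ max (θ x₀ + ψ x₀) C ∧ ψ x ≤ max (θ x₀ + ψ x₀) C} :=
    ⟨hxε ε hε.1, le_max_of_le_left (hθM ε hε),
      le_max_of_le_right (hC ε hε.1 _ (hxε ε hε.1) (hminε ε hε.1) (hθM ε hε))⟩
  obtain ⟨x, hx, hmin⟩ := (hcompact _).exists_isMinOn ⟨_, hmem 1 (by simp)⟩
    (hθ.mono (sep_subset _ _))
  refine ⟨x, hx.1, fun z hz => ?_⟩
  have hlim : Tendsto (fun ε : ℝ => θ z + ε * ψ z) (𝓝[>] 0) (𝓝 (θ z)) := by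
    have : Tendsto (fun ε : ℝ => θ z + ε * ψ z) (𝓝 0) (𝓝 (θ z + 0 * ψ z)) :=
      Continuous.tendsto (by fun_prop) 0
    simpa using this.mono_left nhdsWithin_le_nhds
  refine ge_of_tendsto hlim ?_
  filter_upwards [Ioc_mem_nhdsGT one_pos] with ε hε
  exact (hmin (hmem ε hε)).trans (hθε ε hε z hz)

/-- At every boundary point of `Ω` the `C¹` size of `u` tends to infinity: the hypothesis under
which the alternatives `|Du| = ∞` and `|u| = ∞` on `∂Ω` are treated together. -/
def BlowsUpOnFrontier (Ω : Set E) (u : E → ℝ) : Prop :=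
  ∀ p ∈ frontier Ω, Tendsto (fun x => max ‖∇ u x‖ |u x|) (𝓝[Ω] p) atTop

lemma isCompact_sublevel_of_tendsto_frontier {X : Type*} [PseudoMetricSpace X] [ProperSpace X]
    {Ω : Set X} {f g : X → ℝ} {R C : ℝ} (hΩ : IsOpen Ω)
    (hf : ∀ p ∈ frontier Ω, Tendsto f (𝓝[Ω] p) atTop) (hg : ContinuousOn g Ω)
    (hbdd : Bornology.IsBounded {x ∈ Ω | g x ≤ R}) (hfg : ∀ x ∈ Ω, g x ≤ R → f x ≤ C) :
    IsCompact {x ∈ Ω | g x ≤ R} := by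
  refine Metric.isCompact_of_isClosed_isBounded (isClosed_of_closure_subset fun p hp => ?_) hbdd
  have : (𝓝[{x ∈ Ω | g x ≤ R}] p).NeBot := mem_closure_iff_nhdsWithin_neBot.1 hp
  have hle : 𝓝[{x ∈ Ω | g x ≤ R}] p ≤ 𝓝[Ω] p := nhdsWithin_mono p (sep_subset _ _)
  have hpΩ : p ∈ Ω := by
    by_contra hpΩ
    have hfrontier : p ∈ frontier Ω := by
      rw [hΩ.frontier_eq]
      exact ⟨closure_mono (sep_subset _ _) hp, hpΩ⟩
    obtain ⟨x, hx, hxΩ, hgx⟩ := ((((hf p hfrontier).mono_left hle).eventually_gt_atTop C).and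
      self_mem_nhdsWithin).exists
    exact hx.not_ge (hfg x hxΩ hgx)
  exact ⟨hpΩ, le_of_tendsto ((hg p hpΩ).mono_left hle)
    (eventually_mem_nhdsWithin.mono fun x hx => hx.2)⟩

namespace IsShrinkerPotential

variable {κ R : ℝ} {Ω : Set E} {w : E → ℝ} {x : E}

lemma continuousOn_eulerDefect (hw : IsShrinkerPotential κ Ω w) :
    ContinuousOn (eulerDefect w) Ω := fun _ hx =>
  (contDiffAt_eulerDefect (hw.contDiffAt hx)).continuousAt.continuousWithinAt

lemma continuousOn_penalty (hw : IsShrinkerPotential κ Ω w) : ContinuousOn (penalty κ w) Ω := by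
  have hw₀ := hw.contDiffOn.continuousOn
  have hw₁ := hw.continuousOn_gradient
  unfold penalty legendre
  fun_prop

lemma isCompact_sublevel (hw : IsShrinkerPotential κ Ω w) (hκ : 0 ≤ κ)
    (hblow : BlowsUpOnFrontier Ω w) (R : ℝ) :
    IsCompact {x ∈ Ω | eulerDefect w x ≤ R ∧ penalty κ w x ≤ R} := by
  simp only [← max_le_iff]
  have hbound (x : E) (hx : x ∈ Ω) (hR : max (eulerDefect w x) (penalty κ w x) ≤ R) :
      ‖x‖ ≤ R + 1 ∧ max ‖∇ w x‖ |w x| ≤ 3 * R + 1 := by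
    obtain ⟨hθ, hψ⟩ := max_le_iff.1 hR
    have hθ₀ := hw.eulerDefect_nonneg hκ hx
    have hw : w x = 2 * eulerDefect w x + legendre w x := by
      rw [eulerDefect, legendre, real_inner_comm]
      ring
    rw [penalty] at hψ
    have hle {t : ℝ} (ht : t ^ 2 ≤ R) : t ≤ R + 1 := by nlinarith [sq_nonneg (t - 1)]
    have hκx := mul_nonneg hκ (sq_nonneg ‖x‖)
    have hleg : |legendre w x| ≤ R + 1 :=
      hle (by rw [sq_abs]; nlinarith [sq_nonneg ‖x‖, sq_nonneg ‖∇ w x‖])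
    have hx : ‖x‖ ≤ R + 1 :=
      hle (by nlinarith [sq_nonneg (legendre w x), sq_nonneg ‖∇ w x‖])
    have hgrad : ‖∇ w x‖ ≤ R + 1 :=
      hle (by nlinarith [sq_nonneg (legendre w x), sq_nonneg ‖x‖])
    refine ⟨hx, max_le (by linarith) ?_⟩
    rw [hw]
    exact (abs_add_le _ _).trans (by rw [abs_of_nonneg (by positivity)]; linarith)
  refine isCompact_sublevel_of_tendsto_frontier hw.isOpen hblow
    (hw.continuousOn_eulerDefect.sup hw.continuousOn_penalty) ?_ (fun x hx hR => (hbound x hx hR).2)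
  exact Metric.isBounded_closedBall.subset fun x hx =>
    mem_closedBall_zero_iff.2 (hbound x hx.1 hx.2).1

theorem exists_isMinOn_eulerDefect (hw : IsShrinkerPotential κ Ω w) (hκ : 0 < κ)
    (hblow : BlowsUpOnFrontier Ω w) (hne : Ω.Nonempty) :
    ∃ x ∈ Ω, IsMinOn (eulerDefect w) Ω x := by
  refine exists_isMinOn_of_penalization hne hw.continuousOn_eulerDefect hw.continuousOn_penalty
    (fun x hx => hw.eulerDefect_nonneg hκ.le hx) (fun x _ => by unfold penalty; positivity)
    (hw.isCompact_sublevel hκ.le hblow) fun M => ⟨(2 * κ + 1) * (2 * (2 * κ + 1) / κ * M ^ 2 +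
      2 * κ * Module.finrank ℝ E), fun ε hε x hx hmin hM => ?_⟩
  refine (hw.penalty_le_of_isLocalMin hκ hε hx
    (hmin.isLocalMin (hw.isOpen.mem_nhds hx))).trans ?_
  have hθ₀ := hw.eulerDefect_nonneg hκ.le hx
  gcongr

lemma eventually_eulerDefect_eq (hw : IsShrinkerPotential κ Ω w) (hκ : 0 < κ) (hx : x ∈ Ω)
    (hmin : IsLocalMin (eulerDefect w) x) :
    ∀ᶠ z in 𝓝 x, eulerDefect w z = eulerDefect w x := by
  obtain ⟨U, v, hv, hxU, hleft⟩ := hw.exists_isLocalLegendre hx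
  have hx' : ∇ v (∇ w x) = x := hleft.self_of_nhds
  have hv' := hw.isDriftEigenfunction hv
  have hgrad_v : ContinuousAt (∇ v) (∇ w x) :=
    (hasFDerivAt_gradient (hv.contDiffAt hxU)).continuousAt
  have hgrad_w : ContinuousAt (∇ w) x := (hasFDerivAt_gradient (hw.contDiffAt hx)).continuousAt
  have hpull : IsLocalMin (eulerDefect w ∘ ∇ v) (∇ w x) :=
    (hx'.symm ▸ hmin).comp_tendsto hgrad_v
  have hdual : eulerDefect w ∘ ∇ v =ᶠ[𝓝 (∇ w x)] -eulerDefect v :=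
    (hv.isOpen.eventually_mem hxU).mono fun y hy => hv.eulerDefect_gradient hy
  have hcont : ContinuousOn (-eulerDefect v) U := fun y hy =>
    (contDiffAt_eulerDefect (hv.contDiffAt hy)).continuousAt.neg.continuousWithinAt
  have hconst := (hv'.hasDriftLaplacianOn_neg_eulerDefect hκ.ne').eventually_eq_of_isLocalMin
    hv.isOpen hκ hcont (fun _ _ => le_rfl) hxU (hpull.congr hdual)
  filter_upwards [hgrad_w.eventually hconst, hgrad_w.eventually hdual, hleft] with z hz hdz hlz
  rw [← hdz, ← hdual.self_of_nhds, Function.comp_apply, Function.comp_apply, hlz, hx'] at hz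
  exact hz

end IsShrinkerPotential

lemma eqOn_const_of_isMinOn {X : Type*} [TopologicalSpace X] {Ω : Set X} {θ : X → ℝ} {x₀ : X}
    (hΩ : IsOpen Ω) (hconn : IsPreconnected Ω) (hθ : ContinuousOn θ Ω)
    (hstrong : ∀ x ∈ Ω, IsLocalMin θ x → ∀ᶠ z in 𝓝 x, θ z = θ x) (hx₀ : x₀ ∈ Ω)
    (hmin : IsMinOn θ Ω x₀) : EqOn θ (fun _ => θ x₀) Ω := by
  have hopen : IsOpen {z ∈ Ω | θ z = θ x₀} := isOpen_iff_mem_nhds.2 fun z hz => by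
    have hlocal : IsLocalMin θ z := by
      filter_upwards [hΩ.mem_nhds hz.1] with p hp
      exact hz.2.trans_le (hmin hp)
    filter_upwards [hΩ.mem_nhds hz.1, hstrong z hz.1 hlocal] with p hp hpz
    exact ⟨hp, hpz.trans hz.2⟩
  have hclosed : closure {z ∈ Ω | θ z = θ x₀} ∩ Ω ⊆ {z ∈ Ω | θ z = θ x₀} := fun z hz => by
    have := mem_closure_iff_nhdsWithin_neBot.1 hz.1
    have hle : 𝓝[{z ∈ Ω | θ z = θ x₀}] z ≤ 𝓝[Ω] z := nhdsWithin_mono z (sep_subset _ _)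
    refine ⟨hz.2, tendsto_nhds_unique ((hθ z hz.2).mono_left hle)
      (tendsto_const_nhds.congr' ?_)⟩
    exact eventually_mem_nhdsWithin.mono fun p hp => hp.2.symm
  have hsub := hconn.subset_of_closure_inter_subset hopen ⟨x₀, hx₀, hx₀, rfl⟩ hclosed
  exact fun z hz => (hsub hz).2

theorem IsShrinkerPotential.exists_eqOn_eulerDefect {κ : ℝ} {Ω : Set E} {w : E → ℝ}
    (hw : IsShrinkerPotential κ Ω w) (hκ : 0 ≤ κ) (hblow : BlowsUpOnFrontier Ω w)
    (hconn : IsConnected Ω) : ∃ m, EqOn (eulerDefect w) (fun _ => m) Ω := by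
  rcases hκ.eq_or_lt with rfl | hκ
  · exact ⟨0, fun x hx => (hw.eulerDefect_eq x hx).trans (zero_mul _)⟩
  obtain ⟨x₀, hx₀, hmin⟩ := hw.exists_isMinOn_eulerDefect hκ hblow hconn.nonempty
  exact ⟨_, eqOn_const_of_isMinOn hw.isOpen hconn.isPreconnected hw.continuousOn_eulerDefect
    (fun x hx => hw.eventually_eulerDefect_eq hκ hx) hx₀ hmin⟩

/-! ### Constant Euler defect -/

lemma map_smul_of_fderiv_apply_self {F G : Type*} [NormedAddCommGroup F] [NormedSpace ℝ F]
    [NormedAddCommGroup G] [NormedSpace ℝ G] {f : F → G} {f' : F → F →L[ℝ] G} {x : F} {t : ℝ}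
    (ht : t ∈ Ioc 0 1) (hf : ∀ s ∈ Icc t 1, HasFDerivAt f (f' (s • x)) (s • x))
    (heuler : ∀ s ∈ Icc t 1, f' (s • x) (s • x) = f (s • x)) : f (t • x) = t • f x := by
  have hderiv (s : ℝ) (hs : s ∈ Icc t 1) : HasDerivAt (fun s : ℝ => s⁻¹ • f (s • x)) 0 s := by
    have hs₀ : s ≠ 0 := (ht.1.trans_le hs.1).ne'
    have hline : HasDerivAt (fun s : ℝ => s • x) x s := by
      simpa using (hasDerivAt_id s).smul_const x
    refine ((hasDerivAt_inv hs₀).smul ((hf s hs).comp_hasDerivAt s hline)).congr_deriv ?_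
    rw [Function.comp_apply, ← heuler s hs, map_smul, smul_smul, ← add_smul,
      show s⁻¹ + -(s ^ 2)⁻¹ * s = 0 by field_simp; ring, zero_smul]
  have hconst := constant_of_has_deriv_right_zero
    (fun s hs => (hderiv s hs).continuousAt.continuousWithinAt)
    (fun s hs => (hderiv s (Ico_subset_Icc_self hs)).hasDerivWithinAt) 1 ⟨ht.2, le_rfl⟩
  simp only [inv_one, one_smul] at hconst
  rw [hconst, smul_inv_smul₀ ht.1.ne']

lemma mem_of_le_of_tendsto_frontier {X : Type*} [TopologicalSpace X] {Ω : Set X} {f : X → ℝ}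
    {γ : ℝ → X} {C : ℝ} (hΩ : IsOpen Ω) (hf : ∀ p ∈ frontier Ω, Tendsto f (𝓝[Ω] p) atTop)
    (hγ : Continuous γ) (hγ₁ : γ 1 ∈ Ω)
    (hle : ∀ t ∈ Ioc (0 : ℝ) 1, (∀ s ∈ Icc t 1, γ s ∈ Ω) → f (γ t) ≤ C) :
    ∀ t ∈ Icc (0 : ℝ) 1, γ t ∈ Ω := by
  by_contra! ⟨t, ht, htΩ⟩
  obtain ⟨t₀, ⟨ht₀, ht₀Ω⟩, hgreatest⟩ := (isCompact_Icc.inter_right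
    (hΩ.isClosed_compl.preimage hγ)).exists_isGreatest ⟨t, ht, htΩ⟩
  have hafter (s : ℝ) (hs : s ∈ Ioc t₀ 1) : γ s ∈ Ω := by
    by_contra hsΩ
    exact hs.1.not_ge (hgreatest ⟨⟨ht₀.1.trans hs.1.le, hs.2⟩, hsΩ⟩)
  have hlt : t₀ < 1 := ht₀.2.lt_of_ne fun h => ht₀Ω (h ▸ hγ₁)
  have hnear : ∀ᶠ s in 𝓝[>] t₀, s ∈ Ioc t₀ 1 := Ioc_mem_nhdsGT hlt
  have hγ_tendsto : Tendsto γ (𝓝[>] t₀) (𝓝[Ω] (γ t₀)) :=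
    tendsto_nhdsWithin_iff.2 ⟨hγ.continuousWithinAt, hnear.mono hafter⟩
  have hfrontier : γ t₀ ∈ frontier Ω := by
    rw [hΩ.frontier_eq]
    exact ⟨mem_closure_of_tendsto (tendsto_nhdsWithin_iff.1 hγ_tendsto).1
      (tendsto_nhdsWithin_iff.1 hγ_tendsto).2, ht₀Ω⟩
  obtain ⟨s, hs, hsC⟩ := (hnear.and
    (((hf _ hfrontier).comp hγ_tendsto).eventually_gt_atTop C)).exists
  exact hsC.not_ge (hle s ⟨ht₀.1.trans_lt hs.1, hs.2⟩
    fun r hr => hafter r ⟨hs.1.trans_le hr.1, hr.2⟩)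

section ConstantEulerDefect

variable {Ω : Set E} {w : E → ℝ} {m : ℝ} {x : E}

lemma hess_apply_self_of_eqOn_eulerDefect (hΩ : IsOpen Ω) (hw : ContDiffOn ℝ 2 w Ω)
    (hm : EqOn (eulerDefect w) (fun _ => m) Ω) (hx : x ∈ Ω) : hess w x x = ∇ w x := by
  have hzero : HasGradientAt (eulerDefect w) 0 x :=
    (hasGradientAt_const x m).congr_of_eventuallyEq (hm.eventuallyEq_of_mem (hΩ.mem_nhds hx))
  have := hzero.unique (hasGradientAt_eulerDefect (hw.contDiffAt (hΩ.mem_nhds hx)))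
  exact (sub_eq_zero.1 ((smul_eq_zero.1 this.symm).resolve_left (by norm_num))).symm

lemma gradient_smul_of_eqOn_eulerDefect (hΩ : IsOpen Ω) (hw : ContDiffOn ℝ 2 w Ω)
    (hm : EqOn (eulerDefect w) (fun _ => m) Ω) {t : ℝ} (ht : t ∈ Ioc 0 1)
    (hseg : ∀ s ∈ Icc t 1, s • x ∈ Ω) : ∇ w (t • x) = t • ∇ w x :=
  map_smul_of_fderiv_apply_self ht
    (fun s hs => hasFDerivAt_gradient (hw.contDiffAt (hΩ.mem_nhds (hseg s hs))))
    fun s hs => hess_apply_self_of_eqOn_eulerDefect hΩ hw hm (hseg s hs)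

lemma starConvex_of_eqOn_eulerDefect (hΩ : IsOpen Ω) (hw : ContDiffOn ℝ 2 w Ω)
    (hm : EqOn (eulerDefect w) (fun _ => m) Ω) (hblow : BlowsUpOnFrontier Ω w) :
    StarConvex ℝ 0 Ω := by
  refine starConvex_zero_iff.2 fun x hx t ht₀ ht₁ => ?_
  refine mem_of_le_of_tendsto_frontier (γ := fun t : ℝ => t • x)
    (C := ‖∇ w x‖ + |m| + |⟪x, ∇ w x⟫|) hΩ hblow (by fun_prop) (by simpa using hx)
    (fun t ht hseg => ?_) t ⟨ht₀, ht₁⟩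
  have hgrad := gradient_smul_of_eqOn_eulerDefect hΩ hw hm ht hseg
  have hwt : w (t • x) = m + 1 / 2 * (t * (t * ⟪x, ∇ w x⟫)) := by
    have := hm (hseg t ⟨le_rfl, ht.2⟩)
    simp only [eulerDefect, hgrad, real_inner_smul_left, real_inner_smul_right] at this
    linarith
  have hinner : |1 / 2 * (t * (t * ⟪x, ∇ w x⟫))| ≤ |⟪x, ∇ w x⟫| := by
    rw [← mul_assoc, ← mul_assoc, abs_mul, abs_of_pos (by have := ht.1; positivity)]
    exact mul_le_of_le_one_left (abs_nonneg _) (by nlinarith [ht.1, ht.2])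
  rw [hgrad, hwt, norm_smul, Real.norm_of_nonneg ht.1.le]
  refine max_le ?_ ((abs_add_le _ _).trans ?_)
  · have := mul_le_of_le_one_left (norm_nonneg (∇ w x)) ht.2
    linarith [abs_nonneg m, abs_nonneg ⟪x, ∇ w x⟫]
  · linarith [norm_nonneg (∇ w x)]

lemma gradient_eq_hess_zero_of_eqOn_eulerDefect (hΩ : IsOpen Ω) (hw : ContDiffOn ℝ 2 w Ω)
    (hm : EqOn (eulerDefect w) (fun _ => m) Ω) (hstar : StarConvex ℝ 0 Ω) (hx : x ∈ Ω) :
    ∇ w x = hess w 0 x := by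
  have hmem {t : ℝ} (ht : t ∈ Icc (0 : ℝ) 1) : t • x ∈ Ω :=
    starConvex_zero_iff.1 hstar hx ht.1 ht.2
  have h₀ : (0 : E) ∈ Ω := by simpa using hmem ⟨le_rfl, zero_le_one⟩
  have hgrad₀ : ∇ w 0 = 0 := by
    rw [← hess_apply_self_of_eqOn_eulerDefect hΩ hw hm h₀, map_zero]
  have hline (y : E) : HasDerivAt (fun t : ℝ => t • y) y 0 := by
    simpa using (hasDerivAt_id (0 : ℝ)).smul_const y
  have hchain : HasDerivAt (fun t : ℝ => ∇ w (t • x)) (hess w 0 x) 0 :=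
    HasFDerivAt.comp_hasDerivAt_of_eq 0
      (hasFDerivAt_gradient (hw.contDiffAt (hΩ.mem_nhds h₀))) (hline x) (by simp)
  have hray : HasDerivWithinAt (fun t : ℝ => ∇ w (t • x)) (∇ w x) (Icc 0 1) 0 := by
    refine (hline (∇ w x)).hasDerivWithinAt.congr (fun t ht => ?_) (by simp [hgrad₀])
    rcases ht.1.eq_or_lt with rfl | hpos
    · simp [hgrad₀]
    · exact gradient_smul_of_eqOn_eulerDefect hΩ hw hm ⟨hpos, ht.2⟩
        fun s hs => hmem ⟨hpos.le.trans hs.1, hs.2⟩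
  exact (uniqueDiffOn_Icc one_pos 0 ⟨le_rfl, zero_le_one⟩).eq_deriv _ hray
    hchain.hasDerivWithinAt

theorem eq_univ_of_eqOn_eulerDefect (hΩ : IsOpen Ω) (hne : Ω.Nonempty)
    (hw : ContDiffOn ℝ 2 w Ω) (hm : EqOn (eulerDefect w) (fun _ => m) Ω)
    (hblow : BlowsUpOnFrontier Ω w) :
    Ω = univ ∧ ∀ x, w x = m + 1 / 2 * ⟪x, hess w 0 x⟫ := by
  have hgrad {x : E} (hx : x ∈ Ω) : ∇ w x = hess w 0 x :=
    gradient_eq_hess_zero_of_eqOn_eulerDefect hΩ hw hm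
      (starConvex_of_eqOn_eulerDefect hΩ hw hm hblow) hx
  have hquad {x : E} (hx : x ∈ Ω) : w x = m + 1 / 2 * ⟪x, hess w 0 x⟫ := by
    rw [← hgrad hx]
    exact sub_eq_iff_eq_add.1 (hm hx)
  have hfrontier : frontier Ω = ∅ := eq_empty_of_forall_notMem fun p hp => by
    have : (𝓝[Ω] p).NeBot := mem_closure_iff_nhdsWithin_neBot.1 (frontier_subset_closure hp)
    have hcont : Continuous fun x => max ‖hess w 0 x‖ |m + 1 / 2 * ⟪x, hess w 0 x⟫| := by
      fun_prop
    refine not_tendsto_nhds_of_tendsto_atTop (hblow p hp) _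
      ((hcont.tendsto p).mono_left nhdsWithin_le_nhds |>.congr' ?_)
    filter_upwards [self_mem_nhdsWithin] with x hx
    rw [hgrad hx, hquad hx]
  have huniv := (isClopen_iff_frontier_eq_empty.2 hfrontier).eq_univ hne
  exact ⟨huniv, fun x => hquad (huniv ▸ mem_univ x)⟩

end ConstantEulerDefect

theorem IsShrinkerPotential.eq_univ_and_quadratic {κ : ℝ} {Ω : Set E} {w : E → ℝ}
    (hw : IsShrinkerPotential κ Ω w) (hκ : 0 ≤ κ) (hconn : IsConnected Ω)
    (hblow : BlowsUpOnFrontier Ω w) :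
    Ω = univ ∧ ∃ m, ∀ x, w x = m + 1 / 2 * ⟪x, hess w 0 x⟫ := by
  obtain ⟨m, hm⟩ := hw.exists_eqOn_eulerDefect hκ hblow hconn
  obtain ⟨huniv, hquad⟩ :=
    eq_univ_of_eqOn_eulerDefect hw.isOpen hconn.nonempty hw.contDiffOn hm hblow
  exact ⟨huniv, m, hquad⟩

/-! ### Shifting by a multiple of the squared norm -/

section Shift

variable {Ω : Set E} {u g : E → ℝ} {a κ : ℝ} {x : E}

lemma hess_add (hu : ContDiffAt ℝ 2 u x) (hg : ContDiffAt ℝ 2 g x) :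
    hess (u + g) x = hess u x + hess g x :=
  hess_eq_of_hasFDerivAt
    ((eventually_hasGradientAt hu).and (eventually_hasGradientAt hg) |>.mono
      fun _ hz => hasGradientAt_add hz.1 hz.2)
    ((hasFDerivAt_gradient hu).add (hasFDerivAt_gradient hg))

lemma eulerDefect_add (hu : DifferentiableAt ℝ u x) (hg : DifferentiableAt ℝ g x) :
    eulerDefect (u + g) x = eulerDefect u x + eulerDefect g x := by
  simp only [eulerDefect, (hasGradientAt_add hu.hasGradientAt hg.hasGradientAt).gradient,
    Pi.add_apply, inner_add_right]
  ring

lemma BlowsUpOnFrontier.add (hblow : BlowsUpOnFrontier Ω u) (hu : DifferentiableOn ℝ u Ω)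
    (hΩ : IsOpen Ω) (hg : ContDiff ℝ 1 g) : BlowsUpOnFrontier Ω (u + g) := fun p hp => by
  have hcont : Continuous fun x => -max ‖∇ g x‖ |g x| := by
    have hgrad : Continuous (∇ g) := continuous_iff_continuousAt.2 fun x =>
      (contDiffAt_gradient (m := 0) hg.contDiffAt (by simp)).continuousAt
    have := hg.continuous
    fun_prop
  refine tendsto_atTop_mono' _ ?_
    ((hblow p hp).atTop_add ((hcont.tendsto p).mono_left nhdsWithin_le_nhds))
  filter_upwards [self_mem_nhdsWithin] with x hx
  have hgrad := (hasGradientAt_add (hu.differentiableAt (hΩ.mem_nhds hx)).hasGradientAt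
    (hg.differentiable one_ne_zero x).hasGradientAt).gradient
  rw [← sub_eq_add_neg, sub_le_iff_le_add, hgrad, Pi.add_apply]
  refine max_le ?_ ?_
  · exact (norm_le_add_norm_add _ _).trans (add_le_add (le_max_left _ _) (le_max_left _ _))
  · exact (norm_le_add_norm_add (u x) (g x)).trans
      (add_le_add (le_max_right _ _) (le_max_right _ _))

/-- The radial function whose gradient is `a • x`: adding it to `u` adds `a • 1` to the Hessian. -/
def halfNormSq (E : Type*) [NormedAddCommGroup E] (a : ℝ) (x : E) : ℝ := a / 2 * ‖x‖ ^ 2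

lemma hasGradientAt_halfNormSq (a : ℝ) (x : E) : HasGradientAt (halfNormSq E a) (a • x) x := by
  have := hasGradientAt_const_smul (hasGradientAt_norm_sub_sq 0 x) (a / 2)
  simp only [sub_zero, smul_smul, div_mul_cancel₀ _ (two_ne_zero' ℝ)] at this
  exact this

lemma contDiff_halfNormSq {F : Type*} [NormedAddCommGroup F] [InnerProductSpace ℝ F]
    {k : WithTop ℕ∞} (a : ℝ) : ContDiff ℝ k (halfNormSq F a) :=
  contDiff_const.mul (contDiff_norm_sq ℝ)

lemma hess_halfNormSq (a : ℝ) (x : E) : hess (halfNormSq E a) x = a • 1 :=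
  hess_eq_of_hasFDerivAt (Eventually.of_forall (hasGradientAt_halfNormSq a))
    ((hasFDerivAt_id x).const_smul a)

lemma eulerDefect_halfNormSq (a : ℝ) (x : E) : eulerDefect (halfNormSq E a) x = 0 := by
  rw [eulerDefect, (hasGradientAt_halfNormSq a x).gradient, inner_smul_right,
    real_inner_self_eq_norm_sq, halfNormSq]
  ring

lemma isShrinkerPotential_add_halfNormSq (hΩ : IsOpen Ω) (hu : ContDiffOn ℝ 2 u Ω)
    (hpos : ∀ x ∈ Ω, ∀ p ≠ 0, 0 < ⟪(hess u x + a • 1) p, p⟫)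
    (heq : ∀ x ∈ Ω, eulerDefect u x = κ * traceL (hess u x + a • 1)⁻¹ʳ) :
    IsShrinkerPotential κ Ω (u + halfNormSq E a) := by
  have huAt {x : E} (hx : x ∈ Ω) : ContDiffAt ℝ 2 u x := hu.contDiffAt (hΩ.mem_nhds hx)
  have hhess (x : E) (hx : x ∈ Ω) : hess (u + halfNormSq E a) x = hess u x + a • 1 := by
    rw [hess_add (huAt hx) (contDiff_halfNormSq a).contDiffAt, hess_halfNormSq]
  refine ⟨hΩ, hu.add (contDiff_halfNormSq a).contDiffOn, fun x hx => ?_, fun x hx => ?_⟩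
  · rw [hhess x hx]
    exact hpos x hx
  · rw [hhess x hx, ← heq x hx, eulerDefect_add ((huAt hx).differentiableAt two_ne_zero)
      (hasGradientAt_halfNormSq a x).differentiableAt, eulerDefect_halfNormSq, add_zero]

theorem eq_univ_and_quadratic_of_hess_pos (hκ : 0 ≤ κ) (hΩ : IsOpen Ω) (hconn : IsConnected Ω)
    (hu : ContDiffOn ℝ 2 u Ω) (hpos : ∀ x ∈ Ω, ∀ p ≠ 0, 0 < ⟪(hess u x + a • 1) p, p⟫)
    (heq : ∀ x ∈ Ω, eulerDefect u x = κ * traceL (hess u x + a • 1)⁻¹ʳ)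
    (hblow : BlowsUpOnFrontier Ω u) :
    Ω = univ ∧ ∃ m, ∀ x, u x = m + 1 / 2 * ⟪x, hess u 0 x⟫ := by
  obtain ⟨rfl, m, hm⟩ := (isShrinkerPotential_add_halfNormSq hΩ hu hpos heq).eq_univ_and_quadratic
    hκ hconn (hblow.add (hu.differentiableOn two_ne_zero) hΩ (contDiff_halfNormSq a))
  refine ⟨rfl, m, fun x => ?_⟩
  have := hm x
  rw [hess_add (hu.contDiffAt univ_mem) (contDiff_halfNormSq a).contDiffAt, hess_halfNormSq] at this
  simp only [Pi.add_apply, halfNormSq, _root_.add_apply, _root_.smul_apply, inner_add_right,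
    inner_smul_right, one_apply_eq_self, real_inner_self_eq_norm_sq] at this
  linarith

lemma ringInverse_neg {R : Type*} [Ring R] (r : R) : (-r)⁻¹ʳ = -r⁻¹ʳ := by
  by_cases hr : IsUnit r
  · obtain ⟨v, rfl⟩ := hr
    rw [← Units.val_neg, Ring.inverse_unit, Ring.inverse_unit, inv_neg, Units.val_neg]
  · rw [Ring.inverse_non_unit _ hr, Ring.inverse_non_unit _ (mt (IsUnit.neg_iff r).1 hr), neg_zero]

lemma gradient_neg (u : E → ℝ) : ∇ (-u) = -∇ u := funext fun x => by
  rw [gradient, fderiv_neg, map_neg, Pi.neg_apply, gradient]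

lemma hess_neg (u : E → ℝ) : hess (-u) = -hess u := funext fun x => by
  rw [hess, gradient_neg, fderiv_neg, Pi.neg_apply, hess]

lemma BlowsUpOnFrontier.neg (hblow : BlowsUpOnFrontier Ω u) : BlowsUpOnFrontier Ω (-u) := by
  simpa [BlowsUpOnFrontier, gradient_neg] using hblow

theorem eq_univ_and_quadratic_of_hess_definite (hκ : 0 ≤ κ) (hΩ : IsOpen Ω)
    (hconn : IsConnected Ω) (hu : ContDiffOn ℝ 2 u Ω)
    (hdef : (∀ x ∈ Ω, ∀ p ≠ 0, 0 < ⟪(hess u x + a • 1) p, p⟫) ∨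
      ∀ x ∈ Ω, ∀ p ≠ 0, ⟪(hess u x + a • 1) p, p⟫ < 0)
    (heq : ∀ x ∈ Ω, eulerDefect u x = κ * traceL (hess u x + a • 1)⁻¹ʳ)
    (hblow : BlowsUpOnFrontier Ω u) :
    Ω = univ ∧ ∃ m, ∀ x, u x = m + 1 / 2 * ⟪x, hess u 0 x⟫ := by
  rcases hdef with hpos | hneg
  · exact eq_univ_and_quadratic_of_hess_pos hκ hΩ hconn hu hpos heq hblow
  have hhess (x : E) : hess (-u) x + (-a) • 1 = -(hess u x + a • 1) := by
    rw [hess_neg, Pi.neg_apply, neg_smul, neg_add]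
  have hpos (x : E) (hx : x ∈ Ω) (p : E) (hp : p ≠ 0) :
      0 < ⟪(hess (-u) x + (-a) • 1) p, p⟫ := by
    rw [hhess, _root_.neg_apply, inner_neg_left]
    exact neg_pos.2 (hneg x hx p hp)
  have heq' (x : E) (hx : x ∈ Ω) :
      eulerDefect (-u) x = κ * traceL (hess (-u) x + (-a) • 1)⁻¹ʳ := by
    rw [hhess, ringInverse_neg, map_neg, mul_neg, ← heq x hx, eulerDefect, eulerDefect,
      gradient_neg, Pi.neg_apply, Pi.neg_apply, inner_neg_right]
    ring
  obtain ⟨huniv, m, hm⟩ :=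
    eq_univ_and_quadratic_of_hess_pos (u := -u) hκ hΩ hconn hu.neg hpos heq' hblow.neg
  refine ⟨huniv, -m, fun x => ?_⟩
  have := hm x
  simp only [hess_neg, Pi.neg_apply, _root_.neg_apply, inner_neg_right] at this
  linarith

end Shift

/-! ### Matrices -/

lemma traceL_inverse_eq_sum {ι : Type*} [Fintype ι] {T : E →L[ℝ] E} (hT : IsUnit T)
    (b : OrthonormalBasis ι ℝ E) {μ : ι → ℝ} (hb : ∀ i, T (b i) = μ i • b i) :
    traceL T⁻¹ʳ = ∑ i, 1 / μ i := by
  rw [traceL_eq_sum_inner _ b]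
  refine Finset.sum_congr rfl fun i _ => eq_one_div_of_mul_eq_one_right ?_
  rw [← real_inner_smul_left, ← map_smul, ← hb, ← mul_apply_eq_comp,
    Ring.inverse_mul_cancel T hT, one_apply_eq_self, real_inner_self_eq_norm_sq, b.norm_eq_one,
    one_pow]

section Matrix

variable {n : ℕ} {Ω : Set (EuclideanSpace ℝ (Fin n))} {u : EuclideanSpace ℝ (Fin n) → ℝ}
  {x : EuclideanSpace ℝ (Fin n)} {a : ℝ}

lemma Hess_apply (n : ℕ) (u : EuclideanSpace ℝ (Fin n) → ℝ) (x : EuclideanSpace ℝ (Fin n))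
    (i j : Fin n) :
    Hess n u x i j = ⟪hess u x (EuclideanSpace.single i 1), EuclideanSpace.single j 1⟫ := by
  simp [Hess, inner_hess, iteratedFDeriv_two_apply]

lemma isHermitian_Hess (hu : ContDiffAt ℝ 2 u x) : (Hess n u x).IsHermitian := by
  refine IsHermitian.ext fun i j => ?_
  rw [Hess_apply, Hess_apply, star_trivial, real_inner_comm]
  exact (isSymmetric_hess hu _ _).symm

lemma toEuclideanCLM_Hess (hu : ContDiffAt ℝ 2 u x) :
    toEuclideanCLM (𝕜 := ℝ) (Hess n u x) = hess u x := by
  refine ContinuousLinearMap.coe_injective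
    ((EuclideanSpace.basisFun (Fin n) ℝ).toBasis.ext fun j => ?_)
  ext i
  have := isSymmetric_hess hu (EuclideanSpace.single i 1) (EuclideanSpace.single j 1)
  simpa [Hess_apply, EuclideanSpace.inner_single_left, ofLp_toEuclideanCLM] using this

lemma inner_toEuclideanCLM_pos {A : Matrix (Fin n) (Fin n) ℝ} (hA : A.PosDef)
    {p : EuclideanSpace ℝ (Fin n)} (hp : p ≠ 0) : 0 < ⟪toEuclideanCLM (𝕜 := ℝ) A p, p⟫ := by
  rw [real_inner_comm, inner_toEuclideanCLM]
  simpa using hA.dotProduct_mulVec_pos (mt (WithLp.ofLp_eq_zero 2).1 hp)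

lemma traceL_inverse_add_smul_one {A : Matrix (Fin n) (Fin n) ℝ} (hA : A.IsHermitian)
    (hunit : IsUnit (toEuclideanCLM (𝕜 := ℝ) A + a • 1)) :
    traceL (toEuclideanCLM (𝕜 := ℝ) A + a • 1)⁻¹ʳ = ∑ i, 1 / (a + eigs A i) := by
  have heigs : eigs A = hA.eigenvalues := dif_pos hA
  rw [heigs]
  refine traceL_inverse_eq_sum hunit hA.eigenvectorBasis fun i => ?_
  have : toEuclideanCLM (𝕜 := ℝ) A (hA.eigenvectorBasis i) =
      hA.eigenvalues i • hA.eigenvectorBasis i :=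
    WithLp.ofLp_injective 2 (hA.mulVec_eigenvectorBasis i)
  rw [_root_.add_apply, this, _root_.smul_apply, one_apply_eq_self, ← add_smul, add_comm]

lemma toEuclideanCLM_Hess_add_smul_one (hu : ContDiffAt ℝ 2 u x) (a : ℝ) :
    toEuclideanCLM (𝕜 := ℝ) (Hess n u x + a • 1) = hess u x + a • 1 := by
  rw [map_add, map_smul, map_one, toEuclideanCLM_Hess hu]

lemma hess_definite_of_posDef (hu : ∀ x ∈ Ω, ContDiffAt ℝ 2 u x)
    (hadm : (∀ x ∈ Ω, (Hess n u x + a • (1 : Matrix (Fin n) (Fin n) ℝ)).PosDef) ∨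
      ∀ x ∈ Ω, (-(a • (1 : Matrix (Fin n) (Fin n) ℝ)) - Hess n u x).PosDef) :
    (∀ x ∈ Ω, ∀ p ≠ 0, 0 < ⟪(hess u x + a • 1) p, p⟫) ∨
      ∀ x ∈ Ω, ∀ p ≠ 0, ⟪(hess u x + a • 1) p, p⟫ < 0 := by
  refine hadm.imp (fun h x hx p hp => ?_) fun h x hx p hp => ?_
  · rw [← toEuclideanCLM_Hess_add_smul_one (hu x hx)]
    exact inner_toEuclideanCLM_pos (h x hx) hp
  · rw [← neg_pos, ← inner_neg_left, ← _root_.neg_apply,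
      ← toEuclideanCLM_Hess_add_smul_one (hu x hx), ← map_neg, neg_add_rev,
      ← sub_eq_add_neg]
    exact inner_toEuclideanCLM_pos (h x hx) hp

lemma isQuadPoly_of_forall_eq {m : ℝ} (hu : ContDiffAt ℝ 2 u 0)
    (hm : ∀ x, u x = m + 1 / 2 * ⟪x, hess u 0 x⟫) : IsQuadPoly n u := by
  refine ⟨Hess n u 0, 0, m, isHermitian_iff_isSymm.1 (isHermitian_Hess hu), fun x => ?_⟩
  have hsum : ∑ i, ∑ j, Hess n u 0 i j * x i * x j = ⟪x, hess u 0 x⟫ := by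
    rw [← toEuclideanCLM_Hess hu, inner_toEuclideanCLM]
    simp only [dotProduct, mulVec, Finset.mul_sum]
    exact Finset.sum_congr rfl fun i _ => Finset.sum_congr rfl fun j _ => by ring
  rw [hm x, hsum, inner_zero_left]
  ring

end Matrix

lemma tendsto_nhdsWithin_atTop_of_seq {X : Type*} [TopologicalSpace X] [FirstCountableTopology X]
    {Ω : Set X} {f : X → ℝ} {p : X}
    (hf : ∀ z : ℕ → X, (∀ k, z k ∈ Ω) → Tendsto z atTop (𝓝 p) →
      Tendsto (fun k => f (z k)) atTop atTop) : Tendsto f (𝓝[Ω] p) atTop := by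
  refine tendsto_of_seq_tendsto fun z hz => ?_
  obtain ⟨hzp, hzΩ⟩ := tendsto_nhdsWithin_iff.1 hz
  obtain ⟨N, hN⟩ := eventually_atTop.1 hzΩ
  exact (tendsto_add_atTop_iff_nat N).1 (hf (fun k => z (k + N)) (fun k => hN _ (by omega))
    ((tendsto_add_atTop_iff_nat N).2 hzp))

lemma blowsUpOnFrontier_of_seq {Ω : Set E} {u : E → ℝ}
    (hblow : (∀ p ∈ frontier Ω, ∀ z : ℕ → E, (∀ k, z k ∈ Ω) → Tendsto z atTop (𝓝 p) →
        Tendsto (fun k => ‖∇ u (z k)‖) atTop atTop) ∨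
      ∀ p ∈ frontier Ω, ∀ z : ℕ → E, (∀ k, z k ∈ Ω) → Tendsto z atTop (𝓝 p) →
        Tendsto (fun k => |u (z k)|) atTop atTop) : BlowsUpOnFrontier Ω u := by
  intro p hp
  rcases hblow with hgrad | hval
  · exact tendsto_atTop_mono (fun _ => le_max_left _ _)
      (tendsto_nhdsWithin_atTop_of_seq (hgrad p hp))
  · exact tendsto_atTop_mono (fun _ => le_max_right _ _)
      (tendsto_nhdsWithin_atTop_of_seq (hval p hp))

theorem bernstein_domain_tau_pi_div_four_general {n : ℕ} {κ a : ℝ} (hκ : 0 ≤ κ)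
    {Ω : Set (EuclideanSpace ℝ (Fin n))} (hΩ : IsOpen Ω) (hconn : IsConnected Ω)
    {u : EuclideanSpace ℝ (Fin n) → ℝ} (hu : ContDiffOn ℝ 2 u Ω)
    (heq : ∀ x ∈ Ω, -κ * ∑ i, 1 / (a + eigs (Hess n u x) i) = -u x + 1 / 2 * ⟪x, ∇ u x⟫)
    (hadm : (∀ x ∈ Ω, (Hess n u x + a • (1 : Matrix (Fin n) (Fin n) ℝ)).PosDef) ∨
      ∀ x ∈ Ω, (-(a • (1 : Matrix (Fin n) (Fin n) ℝ)) - Hess n u x).PosDef)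
    (hblow : BlowsUpOnFrontier Ω u) : Ω = univ ∧ IsQuadPoly n u := by
  have huAt (x : EuclideanSpace ℝ (Fin n)) (hx : x ∈ Ω) : ContDiffAt ℝ 2 u x :=
    hu.contDiffAt (hΩ.mem_nhds hx)
  have hdef := hess_definite_of_posDef huAt hadm
  have heq' (x : EuclideanSpace ℝ (Fin n)) (hx : x ∈ Ω) :
      eulerDefect u x = κ * traceL (hess u x + a • 1)⁻¹ʳ := by
    have hunit : IsUnit (hess u x + a • 1) := isUnit_of_inner_ne_zero fun p hp =>
      hdef.elim (fun h => (h x hx p hp).ne') fun h => (h x hx p hp).ne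
    rw [← toEuclideanCLM_Hess (huAt x hx)] at hunit ⊢
    rw [traceL_inverse_add_smul_one (isHermitian_Hess (huAt x hx)) hunit, eulerDefect]
    linarith [heq x hx]
  obtain ⟨rfl, m, hm⟩ :=
    eq_univ_and_quadratic_of_hess_definite hκ hΩ hconn hu hdef heq' hblow
  exact ⟨rfl, isQuadPoly_of_forall_eq (huAt 0 (mem_univ 0)) hm⟩

end

theorem bernstein_domain_tau_pi_div_four (n : ℕ) (hn : 1 ≤ n)
    (Ω : Set (EuclideanSpace ℝ (Fin n))) (hΩo : IsOpen Ω) (hΩc : IsConnected Ω)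
    (u : EuclideanSpace ℝ (Fin n) → ℝ)
    (hu : ContDiffOn ℝ 2 u Ω)
    (heq : ∀ x ∈ Ω, -Real.sqrt 2 * ∑ i, 1 / (1 + eigs (Hess n u x) i)
      = -u x + (1/2) * ⟪x, gradient u x⟫)
    (hadm : (∀ x ∈ Ω, (Hess n u x + 1).PosDef) ∨
      (∀ x ∈ Ω, (-(1 : Matrix (Fin n) (Fin n) ℝ) - Hess n u x).PosDef))
    (hblow :
      (∀ p ∈ frontier Ω, ∀ z : ℕ → EuclideanSpace ℝ (Fin n), (∀ k, z k ∈ Ω) →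
        Tendsto z atTop (nhds p) → Tendsto (fun k => ‖gradient u (z k)‖) atTop atTop) ∨
      (∀ p ∈ frontier Ω, ∀ z : ℕ → EuclideanSpace ℝ (Fin n), (∀ k, z k ∈ Ω) →
        Tendsto z atTop (nhds p) → Tendsto (fun k => |u (z k)|) atTop atTop)) :
    Ω = Set.univ ∧ IsQuadPoly n u :=
  bernstein_domain_tau_pi_div_four_general (sqrt_nonneg 2) hΩo hΩc hu heq
    (by simpa only [one_smul] using hadm) (blowsUpOnFrontier_of_seq hblow)
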